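/- arXiv:2512.22696 — 2 statements merged into one kernel-verified Lean document; each statement's English description precedes it below -/
import Mathlib

section
/- Let a, b, c be pairwise coprime positive integers with c² = a² + b² + ab, and let m ≥ 1 be an integer. Then the triangle with side lengths ((a+2b)·m·a·c, (b+2a)·m·b·c, m·c³) tiles into (a+2b)·(b+2a)·m²·c² congruent copies of the triangle with side lengths (a, b, c). -/
noncomputable section

abbrev Plane := EuclideanSpace ℝ (Fin 2)

/-- The point (x, y) in the Euclidean plane. -/
def pt (x y : ℝ) : Plane := (WithLp.equiv 2 (Fin 2 → ℝ)).symm ![x, y]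

/-- `Δ` is a triangle with side lengths `(p, q, r)`: the convex hull of points `P, Q, R`
with `dist Q R = p`, `dist P R = q`, `dist P Q = r`. -/
def IsTriangle (p q r : ℝ) (Δ : Set Plane) : Prop :=
  ∃ P Q R : Plane, dist Q R = p ∧ dist P R = q ∧ dist P Q = r ∧
    Δ = convexHull ℝ {P, Q, R}

/-- `S` tiles into `N` congruent copies of the `(p, q, r)` triangle: there are isometries
`f 1, …, f N` of the plane and a triangle `Δ` with side lengths `(p, q, r)` such that
`S` is the union of the `f i '' Δ` and their interiors are pairwise disjoint. -/
def TilesInto (S : Set Plane) (N : ℕ) (p q r : ℝ) : Prop :=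
  ∃ (f : Fin N → Plane ≃ᵢ Plane) (Δ : Set Plane),
    IsTriangle p q r Δ ∧
    S = ⋃ i, f i '' Δ ∧
    ∀ i j : Fin N, i ≠ j → interior (f i '' Δ) ∩ interior (f j '' Δ) = ∅


abbrev V2 := ℝ × ℝ

def NN (p : V2) : ℝ := p.1 ^ 2 + p.1 * p.2 + p.2 ^ 2

def TriS (P u v : V2) (k : ℝ) : Set V2 :=
  {p | ∃ s t : ℝ, 0 ≤ s ∧ 0 ≤ t ∧ s + t ≤ k ∧
    p.1 = P.1 + s * u.1 + t * v.1 ∧ p.2 = P.2 + s * u.2 + t * v.2}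

def ParS (P u v : V2) (X Y : ℝ) : Set V2 :=
  {p | ∃ s t : ℝ, 0 ≤ s ∧ 0 ≤ t ∧ s ≤ X ∧ t ≤ Y ∧
    p.1 = P.1 + s * u.1 + t * v.1 ∧ p.2 = P.2 + s * u.2 + t * v.2}

def GoodT (a b c : ℝ) (u v : V2) : Prop :=
  NN u = a ^ 2 ∧ NN v = b ^ 2 ∧ NN (u - v) = c ^ 2

def Cov (a b c : ℝ) (S : Set V2) (n : ℕ) : Prop :=
  ∃ l : List (V2 × V2 × V2), l.length = n ∧ (∀ t ∈ l, GoodT a b c t.2.1 t.2.2) ∧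
    ∀ p, p ∈ S ↔ ∃ t ∈ l, p ∈ TriS t.1 t.2.1 t.2.2 1

theorem Cov.union {a b c : ℝ} {S S1 S2 : Set V2} {n1 n2 n : ℕ} (h1 : Cov a b c S1 n1)
    (h2 : Cov a b c S2 n2) (hn : n = n1 + n2) (hS : ∀ p, p ∈ S ↔ p ∈ S1 ∨ p ∈ S2) :
    Cov a b c S n := by
  obtain ⟨l1, e1, g1, c1⟩ := h1
  obtain ⟨l2, e2, g2, c2⟩ := h2
  refine ⟨l1 ++ l2, by simp [e1, e2, hn], ?_, ?_⟩
  · intro t ht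
    rcases List.mem_append.1 ht with h | h
    · exact g1 t h
    · exact g2 t h
  · intro p
    rw [hS, c1, c2]
    constructor
    · rintro (⟨t, ht, hp⟩ | ⟨t, ht, hp⟩)
      · exact ⟨t, List.mem_append.2 (Or.inl ht), hp⟩
      · exact ⟨t, List.mem_append.2 (Or.inr ht), hp⟩
    · rintro ⟨t, ht, hp⟩
      rcases List.mem_append.1 ht with h | h
      · exact Or.inl ⟨t, h, hp⟩
      · exact Or.inr ⟨t, h, hp⟩

theorem Cov.congr {a b c : ℝ} {S S1 : Set V2} {n n1 : ℕ} (h1 : Cov a b c S1 n1)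
    (hn : n = n1) (hS : ∀ p, p ∈ S ↔ p ∈ S1) : Cov a b c S n := by
  obtain ⟨l1, e1, g1, c1⟩ := h1
  exact ⟨l1, by rw [e1, hn], g1, fun p => by rw [hS, c1]⟩

theorem cov_one {a b c : ℝ} (P u v : V2) (h : GoodT a b c u v) :
    Cov a b c (TriS P u v 1) 1 :=
  ⟨[(P, u, v)], rfl, by simpa using h, by simp⟩

theorem NN_neg (u : V2) : NN (-u) = NN u := by simp [NN]

theorem GoodT.neg {a b c : ℝ} {u v : V2} (h : GoodT a b c u v) : GoodT a b c (-u) (-v) := by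
  obtain ⟨h1, h2, h3⟩ := h
  refine ⟨by rw [NN_neg, h1], by rw [NN_neg, h2], ?_⟩
  rw [← h3, ← NN_neg (u - v)]
  congr 1
  abel

theorem cov_par11 {a b c : ℝ} (P u v : V2) (h : GoodT a b c u v) :
    Cov a b c (ParS P u v 1 1) 2 := by
  refine (cov_one P u v h).union (cov_one (P + u + v) (-u) (-v) h.neg) rfl ?_
  intro p
  constructor
  · rintro ⟨s, t, hs, ht, hs1, ht1, h1, h2⟩
    rcases le_total (s + t) 1 with hst | hst
    · exact Or.inl ⟨s, t, hs, ht, hst, h1, h2⟩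
    · refine Or.inr ⟨1 - s, 1 - t, by linarith, by linarith, by linarith, ?_, ?_⟩ <;>
        simp [h1, h2] <;> ring
  · rintro (⟨s, t, hs, ht, hst, h1, h2⟩ | ⟨s, t, hs, ht, hst, h1, h2⟩)
    · exact ⟨s, t, hs, ht, by linarith, by linarith, h1, h2⟩
    · refine ⟨1 - s, 1 - t, by linarith, by linarith, by linarith, by linarith, ?_, ?_⟩ <;>
        simp [h1, h2] <;> ring

theorem parS_add_left (P u v : V2) (X X' Y : ℝ) (hX : 0 ≤ X) (hX' : 0 ≤ X') (p : V2) :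
    p ∈ ParS P u v (X + X') Y ↔ p ∈ ParS P u v X Y ∨ p ∈ ParS (P + X • u) u v X' Y := by
  constructor
  · rintro ⟨s, t, hs, ht, hs1, ht1, h1, h2⟩
    rcases le_total s X with hst | hst
    · exact Or.inl ⟨s, t, hs, ht, hst, ht1, h1, h2⟩
    · refine Or.inr ⟨s - X, t, by linarith, by linarith, by linarith, ht1, ?_, ?_⟩ <;>
        simp [h1, h2] <;> ring
  · rintro (⟨s, t, hs, ht, hs1, ht1, h1, h2⟩ | ⟨s, t, hs, ht, hs1, ht1, h1, h2⟩)
    · exact ⟨s, t, hs, ht, by linarith, by linarith, h1, h2⟩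
    · refine ⟨X + s, t, by linarith, by linarith, by linarith, by linarith, ?_, ?_⟩ <;>
        simp [h1, h2] <;> ring

theorem parS_add_right (P u v : V2) (X Y Y' : ℝ) (hX : 0 ≤ Y) (hX' : 0 ≤ Y') (p : V2) :
    p ∈ ParS P u v X (Y + Y') ↔ p ∈ ParS P u v X Y ∨ p ∈ ParS (P + Y • v) u v X Y' := by
  constructor
  · rintro ⟨s, t, hs, ht, hs1, ht1, h1, h2⟩
    rcases le_total t Y with hst | hst
    · exact Or.inl ⟨s, t, hs, ht, hs1, hst, h1, h2⟩
    · refine Or.inr ⟨s, t - Y, by linarith, by linarith, by linarith, by linarith, ?_, ?_⟩ <;>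
        simp [h1, h2] <;> ring
  · rintro (⟨s, t, hs, ht, hs1, ht1, h1, h2⟩ | ⟨s, t, hs, ht, hs1, ht1, h1, h2⟩)
    · exact ⟨s, t, hs, ht, by linarith, by linarith, h1, h2⟩
    · refine ⟨s, Y + t, by linarith, by linarith, by linarith, by linarith, ?_, ?_⟩ <;>
        simp [h1, h2] <;> ring

theorem cov_par1 {a b c : ℝ} (u v : V2) (h : GoodT a b c u v) (j : ℕ) :
    ∀ P, Cov a b c (ParS P u v ((j + 1 : ℕ) : ℝ) 1) (2 * (j + 1)) := by
  induction j with
  | zero => intro P; simpa using cov_par11 P u v h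
  | succ j ih =>
    intro P
    refine (ih P).union (cov_par11 (P + ((j + 1 : ℕ) : ℝ) • u) u v h) (by ring) ?_
    intro p
    rw [← parS_add_left P u v _ _ _ (by positivity) (by positivity)]
    push_cast
    rfl

theorem cov_par {a b c : ℝ} (u v : V2) (h : GoodT a b c u v) (j l : ℕ) (hj : 0 < j) (hl : 0 < l) :
    ∀ P, Cov a b c (ParS P u v (j : ℝ) (l : ℝ)) (2 * j * l) := by
  obtain ⟨j, rfl⟩ := Nat.exists_eq_succ_of_ne_zero hj.ne'
  obtain ⟨l, rfl⟩ := Nat.exists_eq_succ_of_ne_zero hl.ne'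
  clear hj hl
  induction l with
  | zero => intro P; simpa using cov_par1 u v h j P
  | succ l ih =>
    intro P
    refine (ih P).union (cov_par1 u v h j (P + ((l + 1 : ℕ) : ℝ) • v))
      (by simp only [Nat.succ_eq_add_one]; ring) ?_
    intro p
    have := parS_add_right P u v ((j + 1 : ℕ) : ℝ) ((l + 1 : ℕ) : ℝ) 1 (by positivity)
      (by positivity) p
    simp only [Nat.succ_eq_add_one] at *
    rw [← this]
    push_cast
    rfl

theorem cov_tri {a b c : ℝ} (u v : V2) (h : GoodT a b c u v) (k : ℕ) (hk : 0 < k) :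
    ∀ P, Cov a b c (TriS P u v (k : ℝ)) (k ^ 2) := by
  obtain ⟨k, rfl⟩ := Nat.exists_eq_succ_of_ne_zero hk.ne'
  clear hk
  induction k with
  | zero => intro P; simpa using cov_one P u v h
  | succ k ih =>
    intro P
    have h1 := cov_par1 u v h k P
    have h2 := cov_one (P + ((k + 1 : ℕ) : ℝ) • u) u v h
    have h3 := ih (P + v)
    refine (h1.union h2 rfl (fun p => (Iff.rfl : p ∈ _ ∪ _ ↔ _))).union h3
      (by simp only [Nat.succ_eq_add_one]; ring) ?_
    intro p
    simp only [Nat.succ_eq_add_one, Set.mem_union]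
    have hk0 : (0 : ℝ) ≤ ((k + 1 : ℕ) : ℝ) := by positivity
    have hk1 : ((k + 1 + 1 : ℕ) : ℝ) = ((k + 1 : ℕ) : ℝ) + 1 := by push_cast; ring
    rw [hk1]
    generalize ((k + 1 : ℕ) : ℝ) = K at *
    constructor
    · rintro ⟨s, t, hs, ht, hst, h1, h2⟩
      rcases le_total t 1 with ht1 | ht1
      · rcases le_total s K with hs1 | hs1
        · exact Or.inl (Or.inl ⟨s, t, hs, ht, hs1, ht1, h1, h2⟩)
        · refine Or.inl (Or.inr ⟨s - K, t, by linarith, ht, by linarith, ?_, ?_⟩) <;>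
            simp [h1, h2] <;> ring
      · refine Or.inr ⟨s, t - 1, by linarith, by linarith, by linarith, ?_, ?_⟩ <;>
            simp [h1, h2] <;> ring
    · rintro ((⟨s, t, hs, ht, hs1, ht1, h1, h2⟩ | ⟨s, t, hs, ht, hst, h1, h2⟩) |
        ⟨s, t, hs, ht, hst, h1, h2⟩)
      · exact ⟨s, t, hs, ht, by linarith, h1, h2⟩
      · refine ⟨K + s, t, by linarith, by linarith, by linarith, ?_, ?_⟩ <;>
          simp [h1, h2] <;> ring
      · refine ⟨s, t + 1, by linarith, by linarith, by linarith, ?_, ?_⟩ <;>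
          simp [h1, h2] <;> ring

theorem Cov.pull {a b c : ℝ} {S : Set V2} {n : ℕ} (h : Cov a b c S n) (σ : V2 →ₗ[ℝ] V2)
    (hσ : ∀ p, σ (σ p) = p) (hN : ∀ p, NN (σ p) = NN p) (d : V2) :
    Cov a b c {p | σ p + d ∈ S} n := by
  obtain ⟨l, e, g, cc⟩ := h
  refine ⟨l.map (fun t => (σ (t.1 - d), σ t.2.1, σ t.2.2)), by simp [e], ?_, ?_⟩
  · intro t ht
    obtain ⟨t', ht', rfl⟩ := List.mem_map.1 ht
    obtain ⟨g1, g2, g3⟩ := g t' ht'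
    refine ⟨by rw [hN, g1], by rw [hN, g2], ?_⟩
    simp only [← map_sub]
    rw [hN, g3]
  · have key : ∀ (P u v : V2) (p : V2), p ∈ TriS P u v 1 ↔
        ∃ s t : ℝ, 0 ≤ s ∧ 0 ≤ t ∧ s + t ≤ 1 ∧ p = P + s • u + t • v := by
      intro P u v p
      simp only [TriS, Set.mem_ofPred_eq, Prod.ext_iff, Prod.fst_add, Prod.snd_add, Prod.smul_fst,
        Prod.smul_snd, smul_eq_mul]
    intro p
    simp only [Set.mem_ofPred_eq, cc, List.mem_map, key]
    constructor
    · rintro ⟨t, ht, x, y, hx, hy, hxy, he⟩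
      refine ⟨_, ⟨t, ht, rfl⟩, x, y, hx, hy, hxy, ?_⟩
      rw [← hσ p, eq_sub_of_add_eq he]
      simp only [map_add, map_sub, map_smul]
      abel
    · rintro ⟨_, ⟨t, ht, rfl⟩, x, y, hx, hy, hxy, he⟩
      refine ⟨t, ht, x, y, hx, hy, hxy, ?_⟩
      rw [he]
      simp only [map_add, map_sub, map_smul, hσ]
      abel

theorem triS_iff_pos (P u v : V2) (k : ℝ) (hD : 0 < u.1 * v.2 - u.2 * v.1) (p : V2) :
    p ∈ TriS P u v k ↔
      0 ≤ (p.1 - P.1) * v.2 - (p.2 - P.2) * v.1 ∧ 0 ≤ u.1 * (p.2 - P.2) - u.2 * (p.1 - P.1) ∧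
      ((p.1 - P.1) * v.2 - (p.2 - P.2) * v.1) + (u.1 * (p.2 - P.2) - u.2 * (p.1 - P.1))
        ≤ k * (u.1 * v.2 - u.2 * v.1) := by
  constructor
  · rintro ⟨s, t, hs, ht, hst, h1, h2⟩
    have e1 : (p.1 - P.1) * v.2 - (p.2 - P.2) * v.1 = s * (u.1 * v.2 - u.2 * v.1) := by
      rw [h1, h2]; ring
    have e2 : u.1 * (p.2 - P.2) - u.2 * (p.1 - P.1) = t * (u.1 * v.2 - u.2 * v.1) := by
      rw [h1, h2]; ring
    rw [e1, e2, ← add_mul]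
    exact ⟨by positivity, by positivity, by gcongr⟩
  · rintro ⟨h1, h2, h3⟩
    refine ⟨_, _, div_nonneg h1 hD.le, div_nonneg h2 hD.le, ?_, ?_, ?_⟩
    · rw [← add_div, div_le_iff₀ hD]; exact h3
    · rw [div_mul_eq_mul_div, div_mul_eq_mul_div, add_assoc, ← add_div, ← sub_eq_iff_eq_add',
        eq_div_iff hD.ne']
      ring
    · rw [div_mul_eq_mul_div, div_mul_eq_mul_div, add_assoc, ← add_div, ← sub_eq_iff_eq_add',
        eq_div_iff hD.ne']
      ring

theorem triS_iff_neg (P u v : V2) (k : ℝ) (hD : 0 < u.2 * v.1 - u.1 * v.2) (p : V2) :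
    p ∈ TriS P u v k ↔
      0 ≤ (p.2 - P.2) * v.1 - (p.1 - P.1) * v.2 ∧ 0 ≤ u.2 * (p.1 - P.1) - u.1 * (p.2 - P.2) ∧
      ((p.2 - P.2) * v.1 - (p.1 - P.1) * v.2) + (u.2 * (p.1 - P.1) - u.1 * (p.2 - P.2))
        ≤ k * (u.2 * v.1 - u.1 * v.2) := by
  have h : p ∈ TriS P u v k ↔ p ∈ TriS P v u k := by
    constructor <;> rintro ⟨s, t, hs, ht, hst, h1, h2⟩ <;>
      exact ⟨t, s, ht, hs, by linarith, by linarith, by linarith⟩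
  rw [h, triS_iff_pos P v u k (by linarith)]
  constructor
  · rintro ⟨h1, h2, h3⟩
    exact ⟨by linarith, by linarith, by linarith⟩
  · rintro ⟨h1, h2, h3⟩
    exact ⟨by linarith, by linarith, by linarith⟩

/-- isosceles trapezoid with leg `L`, short base `Q` -/
def Trap (L Q : ℝ) : Set V2 := {p | 0 ≤ p.1 ∧ 0 ≤ p.2 ∧ p.2 ≤ L ∧ p.1 + p.2 ≤ L + Q}

theorem Cov.shift {a b c : ℝ} {S : Set V2} {n : ℕ} (h : Cov a b c S n) (d : V2) :
    Cov a b c {p | p + d ∈ S} n :=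
  h.pull LinearMap.id (fun _ => rfl) (fun _ => rfl) d

theorem nn_pos {a x : ℝ} (ha : 0 < a) : 0 ≤ a * x ↔ 0 ≤ x := by
  constructor
  · intro h; exact nonneg_of_mul_nonneg_right h ha
  · intro h; positivity

theorem cov_core (a b c : ℕ) (ha : 0 < a) (hb : 0 < b) (hc : 0 < c)
    (h : c ^ 2 = a ^ 2 + b ^ 2 + a * b) :
    Cov a b c (Trap ((a : ℝ) * b) ((a : ℝ) ^ 2 + b ^ 2)) (a ^ 2 + b ^ 2 + c ^ 2) := by
  have hA : (0 : ℝ) < a := by exact_mod_cast ha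
  have hB : (0 : ℝ) < b := by exact_mod_cast hb
  have hC : (0 : ℝ) < c := by exact_mod_cast hc
  have hR : (c : ℝ) ^ 2 = a ^ 2 + b ^ 2 + a * b := by exact_mod_cast h
  have t1 := cov_tri (a := a) (b := b) (c := c) ((0 : ℝ), -(a : ℝ)) ((b : ℝ), (0 : ℝ))
    ⟨by simp [NN], by simp [NN], by simp [NN, hR]; ring⟩ b hb ((0 : ℝ), (a : ℝ) * b)
  have t2 := cov_tri (a := a) (b := b) (c := c) (-(a : ℝ), (0 : ℝ)) ((b : ℝ), -(b : ℝ))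
    ⟨by simp [NN], by simp [NN]; ring, by simp [NN, hR]; ring⟩ a ha
    ((a : ℝ) ^ 2 + b ^ 2, (a : ℝ) * b)
  have t3 := cov_tri (a := a) (b := b) (c := c) ((a : ℝ) * (a + b) / c, -((a : ℝ) * b / c))
    (-((b : ℝ) * b / c), -((b : ℝ) * a / c))
    ⟨by simp only [NN]; field_simp; rw [hR]; ring, by simp only [NN]; field_simp; rw [hR]; ring, by
      simp only [NN, Prod.fst_sub, Prod.snd_sub]; field_simp
      rw [show (c : ℝ) ^ 4 = (c ^ 2) ^ 2 by ring, hR]; ring⟩ c hc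
    ((b : ℝ) ^ 2, (a : ℝ) * b)
  refine (t1.union t2 rfl (fun p => (Iff.rfl : p ∈ _ ∪ _ ↔ _))).union t3 (by ring) ?_
  intro p
  simp only [Set.mem_union]
  have m1 : p ∈ TriS ((0 : ℝ), (a : ℝ) * b) ((0 : ℝ), -(a : ℝ)) ((b : ℝ), (0 : ℝ)) b ↔
      0 ≤ p.1 ∧ p.2 ≤ a * b ∧ 0 ≤ b * p.2 - a * p.1 := by
    rw [triS_iff_pos _ _ _ _ (by simp; positivity)]
    refine ⟨fun ⟨h1, h2, h3⟩ => ⟨?_, ?_, ?_⟩, fun ⟨h1, h2, h3⟩ => ⟨?_, ?_, ?_⟩⟩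
    · rw [← nn_pos hA]; linarith
    · have := (nn_pos (x := a * b - p.2) hB).1 (by linarith)
      linarith
    · linarith
    · have := (nn_pos (x := a * b - p.2) hB).2 (by linarith)
      linarith
    · have := (nn_pos hA).2 h1
      linarith
    · simp; linarith
  have m2 : p ∈ TriS ((a : ℝ) ^ 2 + b ^ 2, (a : ℝ) * b) (-(a : ℝ), (0 : ℝ))
      ((b : ℝ), -(b : ℝ)) a ↔
      p.1 + p.2 ≤ c ^ 2 ∧ p.2 ≤ a * b ∧ 0 ≤ (a + b) * p.2 - b * (c ^ 2 - p.1) := by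
    rw [triS_iff_pos _ _ _ _ (by simp; positivity)]
    refine ⟨fun ⟨h1, h2, h3⟩ => ⟨?_, ?_, ?_⟩, fun ⟨h1, h2, h3⟩ => ⟨?_, ?_, ?_⟩⟩
    · have := (nn_pos (x := c ^ 2 - p.1 - p.2) hB).1 (by simp at h1; rw [hR]; linarith)
      linarith
    · have := (nn_pos (x := a * b - p.2) hA).1 (by simp at h2; linarith)
      linarith
    · simp at h3; rw [hR]; linarith
    · have := (nn_pos (x := c ^ 2 - p.1 - p.2) hB).2 (by linarith)
      rw [hR] at this; simp; linarith
    · have := (nn_pos (x := a * b - p.2) hA).2 (by linarith)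
      simp; linarith
    · rw [hR] at h3; simp; linarith
  have hdet : (-((a : ℝ) * b / c)) * (-((b : ℝ) * b / c)) - (a : ℝ) * (a + b) / c * (-((b : ℝ) * a / c)) = a * b := by
    field_simp; rw [hR]; ring
  have m3 : p ∈ TriS ((b : ℝ) ^ 2, (a : ℝ) * b) ((a : ℝ) * (a + b) / c, -((a : ℝ) * b / c))
    (-((b : ℝ) * b / c), -((b : ℝ) * a / c)) c ↔
      0 ≤ a * p.1 - b * p.2 ∧ 0 ≤ p.2 ∧ 0 ≤ b * (c ^ 2 - p.1) - (a + b) * p.2 := by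
    rw [triS_iff_neg _ _ _ _ (by simp only [hdet]; positivity)]
    simp only [hdet]
    have e1 : (p.2 - a * b) * -((b : ℝ) * b / c) - (p.1 - b ^ 2) * -((b : ℝ) * a / c) =
      (b / c) * (a * p.1 - b * p.2) := by field_simp; ring
    have e2 : -((a : ℝ) * b / c) * (p.1 - b ^ 2) - a * (a + b) / c * (p.2 - a * b) =
      (a / c) * (b * (c ^ 2 - p.1) - (a + b) * p.2) := by rw [hR]; field_simp; ring
    rw [e1, e2, nn_pos (by positivity), nn_pos (by positivity)]
    have e3 : (b : ℝ) / c * (a * p.1 - b * p.2) + a / c * (b * (c ^ 2 - p.1) - (a + b) * p.2)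
      = c * (a * b) - c * p.2 := by
        have : (b : ℝ) / c * (a * p.1 - b * p.2) + a / c * (b * (c ^ 2 - p.1) - (a + b) * p.2)
          = (a * b * c ^ 2 - (a ^ 2 + b ^ 2 + a * b) * p.2) / c := by field_simp; ring
        rw [this, ← hR]; field_simp
    rw [e3]
    refine ⟨fun ⟨h1, h2, h3⟩ => ⟨h1, ?_, h2⟩, fun ⟨h1, h2, h3⟩ => ⟨h1, h3, ?_⟩⟩
    · rw [← nn_pos hC]; linarith
    · have := (nn_pos hC).2 h2
      linarith
  rw [m1, m2, m3]
  clear m1 m2 m3 t1 t2 t3 hdet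
  simp only [Trap, Set.mem_ofPred_eq]
  have hQ : (a : ℝ) * b + (a ^ 2 + b ^ 2) = c ^ 2 := by rw [hR]; ring
  rw [hQ]
  obtain ⟨x, y⟩ := p
  simp only
  constructor
  · rintro ⟨h1, h2, h3, h4⟩
    rcases le_total 0 (b * y - a * x) with h5 | h5
    · exact Or.inl (Or.inl ⟨h1, h3, h5⟩)
    rcases le_total 0 ((a + b) * y - b * (c ^ 2 - x)) with h6 | h6
    · exact Or.inl (Or.inr ⟨h4, h3, h6⟩)
    · exact Or.inr ⟨by linarith, h2, by linarith⟩
  · rintro ((⟨h1, h2, h3⟩ | ⟨h1, h2, h3⟩) | ⟨h1, h2, h3⟩)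
    · have hy : 0 ≤ y := by
        rw [← nn_pos hB]; have := (nn_pos hA).2 h1; linarith
      refine ⟨h1, hy, h2, ?_⟩
      have : 0 ≤ a * (c ^ 2 - x - y) := by
        rw [hR]
        have := (nn_pos (x := a * b - y) (add_pos hA hB)).2 (by linarith)
        nlinarith [pow_pos hA 3]
      have := (nn_pos hA).1 this
      linarith
    · have hy : 0 ≤ y := by
        rw [← nn_pos hA]; have := (nn_pos (x := c ^ 2 - x - y) hB).2 (by linarith); linarith
      refine ⟨?_, hy, h2, h1⟩
      rw [← nn_pos hB]
      have := (nn_pos (x := a * b - y) (add_pos hA hB)).2 (by linarith)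
      rw [hR] at h3
      nlinarith [pow_pos hB 3]
    · have hx : 0 ≤ x := by
        rw [← nn_pos hA]; have := (nn_pos hB).2 h2; linarith
      refine ⟨hx, h2, ?_, ?_⟩
      · have : 0 ≤ (c : ℝ) ^ 2 * (a * b - y) := by
          have q1 := (nn_pos hA).2 h3
          have q2 := (nn_pos hB).2 h1
          have : (c : ℝ) ^ 2 * (a * b - y) = a * (b * (c ^ 2 - x) - (a + b) * y) + b * (a * x - b * y) := by
            rw [mul_sub ((c : ℝ) ^ 2)]
            nth_rewrite 2 [hR]; ring
          rw [this]; linarith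
        have := (nn_pos (by positivity)).1 this
        linarith
      · have : 0 ≤ b * (c ^ 2 - x - y) := by
          have := (nn_pos hA).2 h2; linarith
        have := (nn_pos hB).1 this
        linarith

theorem parS_rect (a b X Y : ℝ) (ha : 0 < a) (hb : 0 < b) (p : V2) :
    p ∈ ParS (X * a, 0) (-a, 0) (0, b) X Y ↔ 0 ≤ p.1 ∧ p.1 ≤ X * a ∧ 0 ≤ p.2 ∧ p.2 ≤ Y * b := by
  constructor
  · rintro ⟨s, t, hs, ht, hs1, ht1, h1, h2⟩
    simp only at h1 h2
    have q1 := (nn_pos (x := X - s) ha).2 (by linarith)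
    have q2 := (nn_pos (x := Y - t) hb).2 (by linarith)
    have q3 := (nn_pos ha).2 hs
    have q4 := (nn_pos hb).2 ht
    rw [h1, h2]
    refine ⟨?_, ?_, ?_, ?_⟩ <;> linarith
  · rintro ⟨h1, h2, h3, h4⟩
    refine ⟨X - p.1 / a, p.2 / b, ?_, by positivity, ?_, ?_, ?_, ?_⟩
    · rw [sub_nonneg, div_le_iff₀ ha]; exact h2
    · have : 0 ≤ p.1 / a := by positivity
      linarith
    · rw [div_le_iff₀ hb]; exact h4
    · simp; field_simp; ring
    · simp; field_simp

theorem cov_strip (a b c i j : ℕ) (ha : 0 < a) (hb : 0 < b) (hc : 0 < c) (hi : 0 < i) (hj : 0 < j)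
    (h : c ^ 2 = a ^ 2 + b ^ 2 + a * b) :
    Cov a b c (Trap ((a : ℝ) * b) ((a : ℝ) ^ 2 + b ^ 2 + i * a + j * b))
      (a ^ 2 + b ^ 2 + c ^ 2 + 2 * i * a + 2 * j * b) := by
  have hA : (0 : ℝ) < a := by exact_mod_cast ha
  have hB : (0 : ℝ) < b := by exact_mod_cast hb
  have hI : (0 : ℝ) < i := by exact_mod_cast hi
  have hJ : (0 : ℝ) < j := by exact_mod_cast hj
  have hR : (c : ℝ) ^ 2 = a ^ 2 + b ^ 2 + a * b := by exact_mod_cast h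
  have t0 := (cov_core a b c ha hb hc h).shift (-(i * a + j * b), 0)
  have t1 := cov_par (a := a) (b := b) (c := c) (-(a : ℝ), 0) (0, (b : ℝ))
    ⟨by simp [NN], by simp [NN], by simp [NN, hR]; ring⟩ i a hi ha (i * a, 0)
  -- swapped roles
  have t2 : Cov a b c (ParS ((j : ℝ) * b, 0) (-(b : ℝ), 0) (0, (a : ℝ)) j b) (2 * j * b) := by
    have t2 := cov_par (a := a) (b := b) (c := c) (0, (a : ℝ)) (-(b : ℝ), 0)
      ⟨by simp [NN], by simp [NN], by simp [NN, hR]; ring⟩ b j hb hj (j * b, 0)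
    refine t2.congr (by ring) ?_
    intro p
    constructor <;> rintro ⟨s, t, h1, h2, h3, h4, h5, h6⟩ <;>
      exact ⟨t, s, h2, h1, h4, h3, by linarith, by linarith⟩
  have t2' := t2.shift (-(i * a : ℝ), 0)
  refine ((t0.union t1 rfl (fun p => (Iff.rfl : p ∈ _ ∪ _ ↔ _))).union t2' (by ring) ?_)
  intro p
  simp only [Set.mem_union, Set.mem_ofPred_eq, parS_rect _ _ _ _ hA hB, parS_rect _ _ _ _ hB hA,
    Trap, Prod.fst_add, Prod.snd_add]
  have p1 := mul_pos hI hA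
  have p2 := mul_pos hJ hB
  have p3 := mul_pos hA hB
  generalize (i : ℝ) * a = I at *
  generalize (j : ℝ) * b = J at *
  rw [mul_comm (b : ℝ) a]
  generalize (a : ℝ) * b = M at *
  have p4 : (0 : ℝ) < a ^ 2 + b ^ 2 := by positivity
  generalize (a : ℝ) ^ 2 + b ^ 2 = W at *
  obtain ⟨x, y⟩ := p
  simp only
  constructor
  · rintro ⟨h1, h2, h3, h4⟩
    rcases le_total x I with h5 | h5
    · exact Or.inl (Or.inr ⟨h1, h5, h2, h3⟩)
    rcases le_total x (I + J) with h6 | h6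
    · exact Or.inr ⟨by linarith, by linarith, by linarith, by linarith⟩
    · exact Or.inl (Or.inl ⟨by linarith, by linarith, by linarith, by linarith⟩)
  · rintro ((⟨h1, h2, h3, h4⟩ | ⟨h1, h2, h3, h4⟩) | ⟨h1, h2, h3, h4⟩) <;>
    refine ⟨?_, ?_, ?_, ?_⟩ <;> linarith

theorem cov_trap (a b c k l : ℕ) (ha : 0 < a) (hb : 0 < b) (hc : 0 < c)
    (hk : a < k * b) (hl : b < l * a)
    (h : c ^ 2 = a ^ 2 + b ^ 2 + a * b) (t : ℕ) : ∀ J, k + l ≤ J →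
    Cov a b c (Trap (((t + 1 : ℕ) : ℝ) * (a * b)) (J * (a * b)))
      (a * b * (2 * (t + 1) * J + (t + 1) ^ 2)) := by
  have base : ∀ J, k + l ≤ J → Cov a b c (Trap ((a : ℝ) * b) (J * (a * b)))
      (a * b * (2 * J + 1)) := by
    intro J hJ
    obtain ⟨k', rfl⟩ := Nat.exists_eq_add_of_le' hJ
    have hk2 : a < (k' + k) * b := by nlinarith
    obtain ⟨i, hi⟩ := Nat.exists_eq_add_of_lt hk2
    obtain ⟨j, hj⟩ := Nat.exists_eq_add_of_lt hl
    have := cov_strip a b c (i + 1) (j + 1) ha hb hc (by omega) (by omega) h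
    refine this.congr ?_ ?_
    · rw [h]
      zify at *
      linear_combination (2 * (a : ℤ)) * hi + 2 * (b : ℤ) * hj
    · intro p
      have : ((k' + (k + l) : ℕ) : ℝ) * (a * b) =
          (a : ℝ) ^ 2 + b ^ 2 + (i + 1 : ℕ) * a + (j + 1 : ℕ) * b := by
        have hi' : (((k' + k) * b : ℕ) : ℝ) = ((a + i + 1 : ℕ) : ℝ) := by rw [hi]
        have hj' : ((l * a : ℕ) : ℝ) = ((b + j + 1 : ℕ) : ℝ) := by rw [hj]
        push_cast at *
        linear_combination (a : ℝ) * hi' + (b : ℝ) * hj'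
      rw [this]
  induction t with
  | zero => intro J hJ; simpa using base J hJ
  | succ t ih =>
    intro J hJ
    have hM : (0 : ℝ) < (a : ℝ) * b := by positivity
    have b1 := base (J + (t + 1)) (by omega)
    have b2 := (ih J hJ).shift (0, -((a : ℝ) * b))
    refine b1.union b2 (by ring) ?_
    intro p
    have p1 : (0 : ℝ) ≤ (J : ℝ) * (a * b) := by positivity
    have p2 : (0 : ℝ) ≤ (t : ℝ) * (a * b) := by positivity
    simp only [Set.mem_ofPred_eq, Trap, Prod.fst_add, Prod.snd_add]
    push_cast
    simp only [add_mul]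
    generalize (J : ℝ) * (a * b) = J' at *
    generalize (t : ℝ) * (a * b) = T at *
    generalize (a : ℝ) * b = M at *
    constructor
    · rintro ⟨h1, h2, h3, h4⟩
      rcases le_total p.2 M with h5 | h5
      · exact Or.inl ⟨h1, h2, h5, by linarith⟩
      · exact Or.inr ⟨by linarith, by linarith, by linarith, by linarith⟩
    · rintro (⟨h1, h2, h3, h4⟩ | ⟨h1, h2, h3, h4⟩) <;>
      refine ⟨?_, ?_, ?_, ?_⟩ <;> linarith

theorem cov_equi (a b c k l : ℕ) (ha : 0 < a) (hb : 0 < b) (hc : 0 < c)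
    (hk : a < k * b) (hl : b < l * a)
    (h : c ^ 2 = a ^ 2 + b ^ 2 + a * b) (s : ℕ) (hs : 3 * (k + l) ≤ s) :
    Cov a b c {p | 0 ≤ p.1 ∧ 0 ≤ p.2 ∧ p.1 + p.2 ≤ (s : ℝ) * (a * b)} (a * b * s ^ 2) := by
  have hM : (0 : ℝ) < (a : ℝ) * b := by positivity
  have hk0 : 0 < k := by
    rcases Nat.eq_zero_or_pos k with rfl | h
    · simp at hk
    · exact h
  obtain ⟨r, rfl⟩ := Nat.exists_eq_add_of_le hs
  obtain ⟨J, hJ⟩ := Nat.exists_eq_add_of_le' (show 1 ≤ k + l by omega)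
  rw [hJ]
  clear hs
  -- o1 = o2 = J+1, o3 = J+1+r
  have tr := fun t => cov_trap a b c k l ha hb hc hk hl h t
  have r1 := (tr J (J + r + 1) (by omega)).pull
    ((LinearMap.snd ℝ ℝ ℝ).prod (LinearMap.fst ℝ ℝ ℝ)) (fun _ => rfl)
    (fun p => by simp [NN]; ring) (-((J + 1 : ℕ) * (a * b) : ℝ), 0)
  have r2 := (tr J (J + 1) (by omega)).pull
    ((-LinearMap.fst ℝ ℝ ℝ - LinearMap.snd ℝ ℝ ℝ).prod (LinearMap.snd ℝ ℝ ℝ))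
    (fun p => by ext <;> simp)
    (fun p => by simp [NN]; ring) ((2 * J + 2 : ℕ) * (a * b), 0)
  have r3 := (tr (J + r) (J + 1) (by omega)).pull
    ((LinearMap.fst ℝ ℝ ℝ).prod (-LinearMap.fst ℝ ℝ ℝ - LinearMap.snd ℝ ℝ ℝ))
    (fun p => by ext <;> simp)
    (fun p => by simp [NN]; ring) (-((J + 1 : ℕ) * (a * b) : ℝ), (3 * (J + 1) + r : ℕ) * (a * b))
  refine (r1.union r2 rfl (fun p => (Iff.rfl : p ∈ _ ∪ _ ↔ _))).union r3 (by ring) ?_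
  intro p
  simp only [Set.mem_union, Set.mem_ofPred_eq, Trap, Prod.fst_add, Prod.snd_add,
    LinearMap.prod_apply, Function.prod, LinearMap.fst_apply, LinearMap.snd_apply, LinearMap.sub_apply,
    LinearMap.neg_apply]
  push_cast
  simp only [add_mul, mul_add, mul_assoc]
  have p1 : (0 : ℝ) ≤ (J : ℝ) * (a * b) := by positivity
  have p2 : (0 : ℝ) ≤ (r : ℝ) * (a * b) := by positivity
  generalize (J : ℝ) * (a * b) = J' at *
  generalize (r : ℝ) * (a * b) = T at *
  generalize (a : ℝ) * b = M at *
  obtain ⟨x, y⟩ := p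
  simp only
  constructor
  · rintro ⟨h1, h2, h3⟩
    rcases le_total x (J' + M) with h4 | h4
    · rcases le_total y (J' + M) with h5 | h5
      · refine Or.inl (Or.inr ?_)
        refine ⟨?_, ?_, ?_, ?_⟩ <;> linarith
      · refine Or.inl (Or.inl ?_)
        refine ⟨?_, ?_, ?_, ?_⟩ <;> linarith
    · rcases le_total (x + y) (2 * J' + 2 * M) with h5 | h5
      · refine Or.inl (Or.inr ?_)
        refine ⟨?_, ?_, ?_, ?_⟩ <;> linarith
      · refine Or.inr ?_
        refine ⟨?_, ?_, ?_, ?_⟩ <;> linarith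
  · rintro ((⟨h1, h2, h3, h4⟩ | ⟨h1, h2, h3, h4⟩) | ⟨h1, h2, h3, h4⟩) <;>
    refine ⟨?_, ?_, ?_⟩ <;> linarith

theorem cov_big (a b c k l : ℕ) (ha : 0 < a) (hb : 0 < b) (hc : 0 < c)
    (hk : a < k * b) (hl : b < l * a)
    (h : c ^ 2 = a ^ 2 + b ^ 2 + a * b) (m : ℕ) (hm : 1 ≤ m) (hs : 3 * (k + l) ≤ 2 * m * c) :
    Cov a b c {p | 0 ≤ p.1 ∧ 0 ≤ p.2 ∧ ((a : ℝ) + 2 * b) * a * p.1 + (b + 2 * a) * b * p.2 ≤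
      (a + 2 * b) * (b + 2 * a) * (m * (a * b * c))}
      ((a + 2 * b) * (b + 2 * a) * m ^ 2 * c ^ 2) := by
  have hA : (0 : ℝ) < a := by exact_mod_cast ha
  have hB : (0 : ℝ) < b := by exact_mod_cast hb
  have hC : (0 : ℝ) < c := by exact_mod_cast hc
  have hM : (0 : ℝ) < m := by exact_mod_cast hm
  have hR : (c : ℝ) ^ 2 = a ^ 2 + b ^ 2 + a * b := by exact_mod_cast h
  have hK : (0 : ℝ) < m * (a * b * c) := by positivity
  obtain ⟨K, hKe⟩ : ∃ K : ℝ, K = m * (a * b * c) := ⟨_, rfl⟩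
  rw [← hKe] at hK ⊢
  have t0 := cov_equi a b c k l ha hb hc hk hl h (2 * m * c) hs
  have t1 := cov_tri (a := a) (b := b) (c := c) (-(a : ℝ), (a : ℝ)) ((b : ℝ), (0 : ℝ))
    ⟨by simp [NN]; ring, by simp [NN], by simp [NN, hR]; ring⟩ (m * b * c) (by positivity)
    (2 * K, 0)
  have t2 := cov_tri (a := a) (b := b) (c := c) (0, (a : ℝ)) ((b : ℝ), -(b : ℝ))
    ⟨by simp [NN], by simp [NN]; ring, by simp [NN, hR]; ring⟩ (m * a * c) (by positivity)
    (0, 2 * K)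
  have t3 := cov_tri (a := a) (b := b) (c := c) (-((a : ℝ) * b / c), (a : ℝ) * (a + b) / c)
    ((b : ℝ) * (a + b) / c, -((b : ℝ) * a / c))
    ⟨by simp only [NN]; field_simp; rw [hR]; ring, by simp only [NN]; field_simp; rw [hR]; ring, by
      simp only [NN, Prod.fst_sub, Prod.snd_sub]; field_simp
      rw [show (c : ℝ) ^ 4 = (c ^ 2) ^ 2 by ring, hR]; ring⟩ (m * c ^ 2) (by positivity)
    (K, K)
  refine ((t0.union t1 rfl (fun p => (Iff.rfl : p ∈ _ ∪ _ ↔ _))).union t2 rfl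
    (fun p => (Iff.rfl : p ∈ _ ∪ _ ↔ _))).union t3 ?_ ?_
  · have : (a + 2 * b) * (b + 2 * a) = c ^ 2 + a ^ 2 + b ^ 2 + 4 * (a * b) := by rw [h]; ring
    rw [this]; ring
  intro p
  have m1 : p ∈ TriS (2 * K, 0) (-(a : ℝ), (a : ℝ)) ((b : ℝ), (0 : ℝ)) (m * b * c : ℕ) ↔
      0 ≤ p.2 ∧ 0 ≤ p.1 + p.2 - 2 * K ∧ 0 ≤ K * (2 * a + b) - a * p.1 - (a + b) * p.2 := by
    rw [triS_iff_neg _ _ _ _ (by simp; positivity)]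
    have e1 : (p.2 - 0) * (b : ℝ) - (p.1 - 2 * K) * 0 = b * p.2 := by ring
    have e2 : (a : ℝ) * (p.1 - 2 * K) - -(a : ℝ) * (p.2 - 0) = a * (p.1 + p.2 - 2 * K) := by ring
    simp only [e1, e2, nn_pos hA, nn_pos hB]
    refine and_congr_right fun _ => and_congr_right fun _ => ?_
    have : ((m * b * c : ℕ) : ℝ) * (a * b - -(a : ℝ) * 0) = b * K := by rw [hKe]; push_cast; ring
    rw [this]
    constructor <;> intro <;> linarith
  have m2 : p ∈ TriS (0, 2 * K) (0, (a : ℝ)) ((b : ℝ), -(b : ℝ)) (m * a * c : ℕ) ↔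
      0 ≤ p.1 + p.2 - 2 * K ∧ 0 ≤ p.1 ∧ 0 ≤ K * (a + 2 * b) - (a + b) * p.1 - b * p.2 := by
    rw [triS_iff_neg _ _ _ _ (by simp; positivity)]
    have e1 : (p.2 - 2 * K) * (b : ℝ) - (p.1 - 0) * -(b : ℝ) = b * (p.1 + p.2 - 2 * K) := by ring
    have e2 : (a : ℝ) * (p.1 - 0) - 0 * (p.2 - 2 * K) = a * p.1 := by ring
    simp only [e1, e2, nn_pos hA, nn_pos hB]
    refine and_congr_right fun _ => and_congr_right fun _ => ?_
    have : ((m * a * c : ℕ) : ℝ) * (a * b - 0 * -(b : ℝ)) = a * K := by rw [hKe]; push_cast; ring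
    rw [this]
    constructor <;> intro <;> linarith
  have hdet : (a : ℝ) * (a + b) / c * (b * (a + b) / c) - -((a : ℝ) * b / c) * -((b : ℝ) * a / c)
      = a * b := by
    field_simp; rw [hR]; ring
  have m3 : p ∈ TriS (K, K) (-((a : ℝ) * b / c), (a : ℝ) * (a + b) / c)
    ((b : ℝ) * (a + b) / c, -((b : ℝ) * a / c)) (m * c ^ 2 : ℕ) ↔
      0 ≤ a * p.1 + (a + b) * p.2 - K * (2 * a + b) ∧
      0 ≤ (a + b) * p.1 + b * p.2 - K * (a + 2 * b) ∧
      ((a : ℝ) + 2 * b) * a * p.1 + (b + 2 * a) * b * p.2 ≤ (a + 2 * b) * (b + 2 * a) * K := by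
    rw [triS_iff_neg _ _ _ _ (by simp only [hdet]; positivity)]
    simp only [hdet]
    have e1 : (p.2 - K) * ((b : ℝ) * (a + b) / c) - (p.1 - K) * -((b : ℝ) * a / c) =
      (b / c) * (a * p.1 + (a + b) * p.2 - K * (2 * a + b)) := by field_simp; ring
    have e2 : (a : ℝ) * (a + b) / c * (p.1 - K) - -((a : ℝ) * b / c) * (p.2 - K) =
      (a / c) * ((a + b) * p.1 + b * p.2 - K * (a + 2 * b)) := by field_simp; ring
    rw [e1, e2, nn_pos (by positivity), nn_pos (by positivity)]
    refine and_congr_right fun _ => and_congr_right fun _ => ?_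
    have e3 : (b : ℝ) / c * (a * p.1 + (a + b) * p.2 - K * (2 * a + b)) +
        a / c * ((a + b) * p.1 + b * p.2 - K * (a + 2 * b)) =
      (b * (a * p.1 + (a + b) * p.2 - K * (2 * a + b)) +
        a * ((a + b) * p.1 + b * p.2 - K * (a + 2 * b))) / c := by field_simp
    have e4 : ((m * c ^ 2 : ℕ) : ℝ) * (a * b) = K * c := by rw [hKe]; push_cast; ring
    rw [e3, e4, div_le_iff₀ hC, mul_assoc K, ← sq, hR]
    constructor <;> intro <;> linarith
  simp only [Set.mem_union, m1, m2, m3]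
  clear m1 m2 m3 t0 t1 t2 t3 hdet
  have hs2 : ((2 * m * c : ℕ) : ℝ) * (a * b) = 2 * K := by rw [hKe]; push_cast; ring
  simp only [Set.mem_ofPred_eq, hs2]
  clear hKe hs2 hs hR
  obtain ⟨x, y⟩ := p
  simp only
  generalize (a : ℝ) = A at *
  generalize (b : ℝ) = B at *
  have hAB := mul_pos hA hB
  have hAA := mul_pos hA hA
  have hBB := mul_pos hB hB
  constructor
  · rintro ⟨h1, h2, h3⟩
    rcases le_total (x + y) (2 * K) with h4 | h4
    · exact Or.inl (Or.inl (Or.inl ⟨h1, h2, h4⟩))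
    rcases le_total (A * x + (A + B) * y) (K * (2 * A + B)) with h5 | h5
    · exact Or.inl (Or.inl (Or.inr ⟨h2, by linarith, by linarith⟩))
    rcases le_total ((A + B) * x + B * y) (K * (A + 2 * B)) with h6 | h6
    · exact Or.inl (Or.inr ⟨by linarith, h1, by linarith⟩)
    · exact Or.inr ⟨by linarith, by linarith, h3⟩
  · rintro (((⟨h1, h2, h3⟩ | ⟨h1, h2, h3⟩) | ⟨h1, h2, h3⟩) | ⟨h1, h2, h3⟩)
    · refine ⟨h1, h2, ?_⟩
      have q1 : 0 ≤ (A + 2 * B) * (B + 2 * A) * (2 * K - x - y) := by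
        apply mul_nonneg (by positivity); linarith
      have q2 : 0 ≤ (A + 2 * B) * B * x := by positivity
      have q3 : 0 ≤ (2 * A + B) * A * y := by positivity
      linarith
    · refine ⟨?_, h1, ?_⟩
      · have q1 := mul_nonneg (add_pos hA hB).le h2
        have q2 := mul_pos hB hK
        rw [← nn_pos hB]
        linarith
      · have q1 : 0 ≤ (A + 2 * B) * (K * (2 * A + B) - A * x - (A + B) * y) :=
          mul_nonneg (by positivity) h3
        have q2 : 0 ≤ (A * A + A * B + B * B) * y := by positivity
        linarith
    · refine ⟨h2, ?_, ?_⟩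
      · have q1 := mul_nonneg (add_pos hA hB).le h1
        have q2 := mul_pos hA hK
        rw [← nn_pos hA]
        linarith
      · have q1 : 0 ≤ (2 * A + B) * (K * (A + 2 * B) - (A + B) * x - B * y) :=
          mul_nonneg (by positivity) h3
        have q2 : 0 ≤ (A * A + A * B + B * B) * x := by positivity
        linarith
    · have q1 : 0 ≤ (2 * A + B) * ((A + B) * x + B * y - K * (A + 2 * B)) :=
          mul_nonneg (by positivity) h2
      have q2 : 0 ≤ (A + 2 * B) * (A * x + (A + B) * y - K * (2 * A + B)) :=
          mul_nonneg (by positivity) h1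
      have hp : 0 < A * A + A * B + B * B := by positivity
      refine ⟨?_, ?_, h3⟩
      · rw [← nn_pos hp]; linarith
      · rw [← nn_pos hp]; linarith

theorem arith_kl (a b c : ℕ) (ha : 0 < a) (hb : 0 < b)
    (hab : Nat.Coprime a b) (h : c ^ 2 = a ^ 2 + b ^ 2 + a * b) (m : ℕ) (hm : 1 ≤ m) :
    ∃ k l, a < k * b ∧ b < l * a ∧ 3 * (k + l) ≤ 2 * m * c := by
  have aux : ∀ a b : ℕ, 0 < a → 0 < b → c ^ 2 = a ^ 2 + b ^ 2 + a * b → 3 ≤ a := by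
    intro a b ha hb h
    by_contra hlt
    have hbc : b < c := by nlinarith
    have : a = 1 ∨ a = 2 := by omega
    rcases this with rfl | rfl
    · nlinarith
    · have : c ≠ b + 1 := by rintro rfl; ring_nf at h; omega
      have : b + 2 ≤ c := by omega
      nlinarith
  have ha3 := aux a b ha hb h
  have hb3 := aux b a hb ha (by rw [h]; ring)
  have aux2 : ∀ a b : ℕ, 3 ≤ a → 3 ≤ b → Nat.Coprime a b → a < ((a + 2) / 3) * b := by
    intro a b ha hb hab
    have h1 : a ≤ ((a + 2) / 3) * b := by
      have : a ≤ (a + 2) / 3 * 3 := by omega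
      nlinarith
    refine lt_of_le_of_ne h1 fun he => ?_
    have : b ∣ a := by rw [he]; exact Dvd.intro_left _ rfl
    have := Nat.Coprime.eq_one_of_dvd hab.symm this
    omega
  refine ⟨(a + 2) / 3, (b + 2) / 3, aux2 a b ha3 hb3 hab, aux2 b a hb3 ha3 hab.symm, ?_⟩
  have h1 : 3 * ((a + 2) / 3 + (b + 2) / 3) ≤ a + b + 4 := by omega
  have h2 : a + b + 4 ≤ 2 * c := by
    by_contra hlt
    have : 2 * c < a + b + 4 := by omega
    have : (2 * c) ^ 2 < (a + b + 4) ^ 2 := by gcongr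
    zify at *
    nlinarith [sq_nonneg ((a : ℤ) - b)]
  nlinarith

theorem disj_of_measure {X : Type*} [TopologicalSpace X] [MeasurableSpace X] [BorelSpace X]
    (μ : MeasureTheory.Measure X) [μ.IsOpenPosMeasure] {n : ℕ} (T : Fin n → Set X) (v : ENNReal)
    (hv : v ≠ ⊤) (hT : ∀ i, μ (T i) = v) (hU : μ (⋃ i, T i) = n * v) (i j : Fin n) (hij : i ≠ j) :
    interior (T i) ∩ interior (T j) = ∅ := by
  have hopen : IsOpen (interior (T i) ∩ interior (T j)) := isOpen_interior.inter isOpen_interior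
  generalize hW : interior (T i) ∩ interior (T j) = W at *
  have hWi : W ⊆ T i := by rw [← hW]; exact Set.inter_subset_left.trans interior_subset
  have hWj : W ⊆ T j := by rw [← hW]; exact Set.inter_subset_right.trans interior_subset
  have hsub : (⋃ i, T i) ⊆ (T i \ W) ∪ ⋃ k ∈ Finset.univ.erase i, T k := by
    intro x hx
    obtain ⟨k, hk⟩ := Set.mem_iUnion.1 hx
    by_cases hki : k = i
    · subst hki
      by_cases hxW : x ∈ W
      · right
        exact Set.mem_biUnion (x := j) (by simp [hij.symm]) (hWj hxW)
      · exact Or.inl ⟨hk, hxW⟩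
    · right
      exact Set.mem_biUnion (x := k) (by simp [hki]) hk
  have h1 : μ (⋃ i, T i) ≤ μ (T i \ W) + (Finset.univ.erase i).card * v := by
    refine (MeasureTheory.measure_mono hsub).trans ((MeasureTheory.measure_union_le _ _).trans ?_)
    gcongr
    refine (MeasureTheory.measure_biUnion_finset_le _ _).trans ?_
    simp [hT]
  have h2 : μ (T i \ W) + μ W = v := by
    have h := MeasureTheory.measure_inter_add_sdiff (μ := μ) (T i) hopen.measurableSet
    rw [Set.inter_eq_self_of_subset_right hWi, hT, add_comm] at h
    exact h
  have hn : (n : ENNReal) * v = v + (Finset.univ.erase i).card * v := by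
    have : n = (Finset.univ.erase i).card + 1 := by
      rw [Finset.card_erase_add_one (Finset.mem_univ i)]; simp
    conv_lhs => rw [this]
    push_cast; ring
  have h3 : (n : ENNReal) * v + μ W ≤ n * v + 0 := by
    calc (n : ENNReal) * v + μ W ≤ μ (T i \ W) + (Finset.univ.erase i).card * v + μ W := by
          rw [← hU]; gcongr
      _ = (μ (T i \ W) + μ W) + (Finset.univ.erase i).card * v := by ring
      _ = n * v + 0 := by rw [h2, hn, add_zero]
  have h4 : μ W ≤ 0 := (ENNReal.add_le_add_iff_left (ENNReal.mul_ne_top (by simp) hv)).1 h3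
  exact hopen.measure_eq_zero_iff μ |>.1 (le_antisymm h4 bot_le)

theorem volume_tri (P u v : V2) : MeasureTheory.volume (TriS P u v 1) =
    ENNReal.ofReal |u.1 * v.2 - u.2 * v.1| * MeasureTheory.volume (TriS 0 (1, 0) (0, 1) 1) := by
  let M : V2 →ₗ[ℝ] V2 := Matrix.toLin (Module.Basis.finTwoProd ℝ) (Module.Basis.finTwoProd ℝ)
    !![u.1, v.1; u.2, v.2]
  have hM : ∀ x : V2, M x = (u.1 * x.1 + v.1 * x.2, u.2 * x.1 + v.2 * x.2) := fun x =>
    Matrix.toLin_finTwoProd_apply _ _ _ _ _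
  have hd : LinearMap.det M = u.1 * v.2 - u.2 * v.1 := by
    simp only [M, LinearMap.det_toLin, Matrix.det_fin_two_of]; ring
  have him : TriS P u v 1 = (fun x => P + x) '' (M '' (TriS 0 (1, 0) (0, 1) 1)) := by
    ext p
    constructor
    · rintro ⟨s, t, hs, ht, hst, h1, h2⟩
      refine ⟨_, ⟨(s, t), ⟨s, t, hs, ht, hst, by simp, by simp⟩, rfl⟩, ?_⟩
      simp only [hM]
      ext <;> simp [h1, h2] <;> ring
    · rintro ⟨_, ⟨x, ⟨s, t, hs, ht, hst, h1, h2⟩, rfl⟩, rfl⟩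
      simp at h1 h2
      refine ⟨s, t, hs, ht, hst, ?_, ?_⟩ <;> simp [hM, h1, h2] <;> ring
  rw [him, Set.image_add_left, MeasureTheory.measure_preimage_add,
    MeasureTheory.Measure.addHaar_image_linearMap, hd]

theorem volume_tri_ne_top (P u v : V2) : MeasureTheory.volume (TriS P u v 1) ≠ ⊤ := by
  rw [volume_tri]
  refine ENNReal.mul_ne_top (by simp) ?_
  refine ne_top_of_le_ne_top (b := MeasureTheory.volume (Set.Icc (0 : V2) 1)) ?_
    (MeasureTheory.measure_mono ?_)
  · exact (isCompact_Icc.measure_lt_top).ne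
  · rintro ⟨x, y⟩ ⟨s, t, hs, ht, hst, h1, h2⟩
    simp at h1 h2
    subst h1 h2
    exact ⟨⟨hs, ht⟩, ⟨by simp; linarith, by simp; linarith⟩⟩

theorem good_det {a b c : ℝ} (ha : 0 < a) (hb : 0 < b) (h : c ^ 2 = a ^ 2 + b ^ 2 + a * b)
    {u v : V2} (hg : GoodT a b c u v) : |u.1 * v.2 - u.2 * v.1| = a * b := by
  obtain ⟨h1, h2, h3⟩ := hg
  rw [← abs_of_pos (mul_pos ha hb), ← sq_eq_sq_iff_abs_eq_abs]
  simp only [NN, Prod.fst_sub, Prod.snd_sub] at h1 h2 h3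
  have h4 : 2 * u.1 * v.1 + u.1 * v.2 + u.2 * v.1 + 2 * u.2 * v.2 = - (a * b) := by linarith
  have h5 : 4 * (a ^ 2 * b ^ 2) - (a * b) ^ 2 = 3 * (u.1 * v.2 - u.2 * v.1) ^ 2 := by
    rw [← h1, ← h2, ← neg_sq (a * b), ← h4]; ring
  linarith

def TriP (A U V : Plane) : Set Plane :=
  {x | ∃ s t : ℝ, 0 ≤ s ∧ 0 ≤ t ∧ s + t ≤ 1 ∧ x = A + s • U + t • V}

theorem hull_triP (A U V : Plane) : convexHull ℝ {A + V, A + U, A} = TriP A U V := by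
  apply Set.Subset.antisymm
  · apply convexHull_min
    · rintro x (rfl | rfl | rfl)
      · exact ⟨0, 1, by simp, by simp, by simp, by simp⟩
      · exact ⟨1, 0, by simp, by simp, by simp, by simp⟩
      · exact ⟨0, 0, by simp, by simp, by simp, by simp⟩
    · rintro x ⟨s, t, hs, ht, hst, rfl⟩ y ⟨s', t', hs', ht', hst', rfl⟩ p q hp hq hpq
      refine ⟨p * s + q * s', p * t + q * t', by positivity, by positivity, ?_, ?_⟩
      · nlinarith
      · obtain rfl : q = 1 - p := by linarith
        module
  · rintro x ⟨s, t, hs, ht, hst, rfl⟩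
    have hc := convex_convexHull ℝ {A + V, A + U, A}
    have m1 : A + V ∈ convexHull ℝ {A + V, A + U, A} := subset_convexHull _ _ (by simp)
    have m2 : A + U ∈ convexHull ℝ {A + V, A + U, A} := subset_convexHull _ _ (by simp)
    have m3 : A ∈ convexHull ℝ {A + V, A + U, A} := subset_convexHull _ _ (by simp)
    have := hc.sum_mem (t := Finset.univ) (w := ![1 - s - t, s, t]) (z := ![A, A + U, A + V])
      (by intro i _; fin_cases i <;> simp <;> linarith) (by simp [Fin.sum_univ_three]; ring)
      (by intro i _; fin_cases i <;> simp [m1, m2, m3])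
    convert this using 1
    simp [Fin.sum_univ_three]
    module

theorem image_triS (R : Plane) (φ : V2 ≃L[ℝ] Plane) (P u v : V2) :
    (φ.toHomeomorph.trans (Homeomorph.addLeft R)) '' TriS P u v 1 =
      TriP (R + φ P) (φ u) (φ v) := by
  ext x
  constructor
  · rintro ⟨p, ⟨s, t, hs, ht, hst, h1, h2⟩, rfl⟩
    refine ⟨s, t, hs, ht, hst, ?_⟩
    have : p = P + s • u + t • v := by ext <;> simp [h1, h2]
    simp [this, add_assoc]
  · rintro ⟨s, t, hs, ht, hst, rfl⟩
    refine ⟨P + s • u + t • v, ⟨s, t, hs, ht, hst, by simp, by simp⟩, ?_⟩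
    simp [add_assoc]

theorem exists_phi (e1 e2 : Plane) (h1 : ‖e1‖ = 1) (h2 : ‖e2‖ = 1) (h12 : inner ℝ e1 e2 = 1 / 2) :
    ∃ φ : V2 ≃L[ℝ] Plane, (∀ p, φ p = p.1 • e1 + p.2 • e2) ∧ ∀ p, ‖φ p‖ ^ 2 = NN p := by
  let f : V2 →ₗ[ℝ] Plane := (LinearMap.fst ℝ ℝ ℝ).smulRight e1 + (LinearMap.snd ℝ ℝ ℝ).smulRight e2
  have hf : ∀ p, f p = p.1 • e1 + p.2 • e2 := fun p => by simp [f]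
  have hn : ∀ p, ‖f p‖ ^ 2 = NN p := by
    intro p
    rw [hf, norm_add_sq_real, inner_smul_left, inner_smul_right, h12, norm_smul, norm_smul, h1, h2]
    simp [NN]
    ring
  have hinj : Function.Injective f := by
    rw [injective_iff_map_eq_zero]
    intro p hp
    have := hn p
    rw [hp] at this
    simp only [NN, norm_zero] at this
    have hx : p.1 = 0 := by nlinarith [sq_nonneg (p.1 + 2 * p.2), sq_nonneg p.1]
    have hy : p.2 = 0 := by rw [hx] at this; nlinarith
    exact Prod.ext hx hy
  let g := LinearMap.linearEquivOfInjective f hinj (by simp)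
  have hg : ∀ p, g p = f p := fun p => LinearMap.linearEquivOfInjective_apply ..
  refine ⟨g.toContinuousLinearEquiv, fun p => ?_, fun p => ?_⟩
  · rw [← hf, ← hg]; rfl
  · rw [← hn, ← hg]; rfl

theorem exists_isom {a b c : ℝ} (ha : 0 < a) (hb : 0 < b) (h : c ^ 2 = a ^ 2 + b ^ 2 + a * b)
    (φ : V2 ≃L[ℝ] Plane) (hφ : ∀ p, ‖φ p‖ ^ 2 = NN p) (A : Plane) (u v : V2)
    (hg : GoodT a b c u v) :
    ∃ f : Plane ≃ᵢ Plane, f '' TriP 0 (φ (-a, 0)) (φ (0, b)) = TriP A (φ u) (φ v) := by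
  obtain ⟨h1, h2, h3⟩ := hg
  let M : V2 →ₗ[ℝ] V2 := (-(1 / a)) • (LinearMap.fst ℝ ℝ ℝ).smulRight u
    + (1 / b) • (LinearMap.snd ℝ ℝ ℝ).smulRight v
  have hM : ∀ p, M p = (-(p.1 / a)) • u + (p.2 / b) • v := by
    intro p; simp [M, smul_smul]; ext <;> simp <;> ring
  have hMN : ∀ p, NN (M p) = NN p := by
    intro p
    rw [hM]
    simp only [NN, Prod.fst_sub, Prod.snd_sub] at h1 h2 h3
    have h4 : 2 * u.1 * v.1 + u.1 * v.2 + u.2 * v.1 + 2 * u.2 * v.2 = - (a * b) := by linarith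
    have : NN ((-(p.1 / a)) • u + (p.2 / b) • v) = (p.1 / a) ^ 2 * (u.1 ^ 2 + u.1 * u.2 + u.2 ^ 2)
       + (p.2 / b) ^ 2 * (v.1 ^ 2 + v.1 * v.2 + v.2 ^ 2) - (p.1 / a) * (p.2 / b) *
       (2 * u.1 * v.1 + u.1 * v.2 + u.2 * v.1 + 2 * u.2 * v.2) := by
      simp [NN]; ring
    rw [this, h1, h2, h4]
    simp only [NN]
    field_simp
    ring
  let G : Plane →ₗ[ℝ] Plane := φ.toLinearEquiv.toLinearMap ∘ₗ M ∘ₗ φ.symm.toLinearEquiv.toLinearMap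
  have hG : ∀ p, G (φ p) = φ (M p) := by intro p; simp [G]
  have hGn : ∀ x, ‖G x‖ = ‖x‖ := by
    intro x
    obtain ⟨p, rfl⟩ := φ.surjective x
    rw [hG, ← sq_eq_sq₀ (norm_nonneg _) (norm_nonneg _), hφ, hφ, hMN]
  let GI : Plane →ₗᵢ[ℝ] Plane := ⟨G, hGn⟩
  let GE := GI.toLinearIsometryEquiv rfl
  have hGE : ∀ x, GE x = G x := fun x => rfl
  refine ⟨GE.toIsometryEquiv.trans (IsometryEquiv.addLeft A), ?_⟩
  have hu : G (φ (-a, 0)) = φ u := by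
    rw [hG, hM]; congr 1; simp [ha.ne']
  have hv : G (φ (0, b)) = φ v := by
    rw [hG, hM]; congr 1; simp [hb.ne']
  have key : ∀ s t : ℝ, (GE.toIsometryEquiv.trans (IsometryEquiv.addLeft A))
      (0 + s • φ (-a, 0) + t • φ (0, b)) = A + s • φ u + t • φ v := by
    intro s t
    have : (GE.toIsometryEquiv.trans (IsometryEquiv.addLeft A))
      (0 + s • φ (-a, 0) + t • φ (0, b)) = A + G (0 + s • φ (-a, 0) + t • φ (0, b)) := rfl
    rw [this, map_add, map_add, map_smul, map_smul, hu, hv, map_zero, zero_add, add_assoc]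
  ext x
  constructor
  · rintro ⟨_, ⟨s, t, hs, ht, hst, rfl⟩, rfl⟩
    exact ⟨s, t, hs, ht, hst, key s t⟩
  · rintro ⟨s, t, hs, ht, hst, rfl⟩
    exact ⟨_, ⟨s, t, hs, ht, hst, rfl⟩, key s t⟩

theorem stmt8 (a b c : ℕ) (ha : 0 < a) (hb : 0 < b) (hc : 0 < c)
    (hab : Nat.Coprime a b) (hac : Nat.Coprime a c) (hbc : Nat.Coprime b c)
    (h : c ^ 2 = a ^ 2 + b ^ 2 + a * b) (m : ℕ) (hm : 1 ≤ m) :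
    ∀ Δ : Set Plane,
      IsTriangle (((a : ℝ) + 2 * b) * m * a * c) (((b : ℝ) + 2 * a) * m * b * c)
        ((m : ℝ) * c ^ 3) Δ →
      TilesInto Δ ((a + 2 * b) * (b + 2 * a) * m ^ 2 * c ^ 2) a b c := by
  rintro Δ ⟨P, Q, R, hQR, hPR, hPQ, rfl⟩
  have hA : (0 : ℝ) < a := by exact_mod_cast ha
  have hB : (0 : ℝ) < b := by exact_mod_cast hb
  have hC : (0 : ℝ) < c := by exact_mod_cast hc
  have hM : (0 : ℝ) < m := by exact_mod_cast hm
  have hR : (c : ℝ) ^ 2 = a ^ 2 + b ^ 2 + a * b := by exact_mod_cast h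
  obtain ⟨k, l, hk, hl, hkl⟩ := arith_kl a b c ha hb hab h m hm
  obtain ⟨L, hLn, hLg, hLc⟩ := cov_big a b c k l ha hb hc hk hl h m hm hkl
  obtain ⟨p, hp⟩ : ∃ p : ℝ, p = ((a : ℝ) + 2 * b) * m * a * c := ⟨_, rfl⟩
  obtain ⟨q, hq⟩ : ∃ q : ℝ, q = ((b : ℝ) + 2 * a) * m * b * c := ⟨_, rfl⟩
  rw [← hp] at hQR
  rw [← hq] at hPR
  have hp0 : 0 < p := by rw [hp]; positivity
  have hq0 : 0 < q := by rw [hq]; positivity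
  have hpqr : p ^ 2 + q ^ 2 - p * q = ((m : ℝ) * c ^ 3) ^ 2 := by
    have h4 : ((c : ℝ) ^ 2) ^ 2 = (a ^ 2 + b ^ 2 + a * b) ^ 2 := by rw [hR]
    rw [show ((m : ℝ) * c ^ 3) ^ 2 = m ^ 2 * c ^ 2 * (c ^ 2) ^ 2 by ring, hp, hq, h4]
    ring
  have hinner : inner ℝ (P - R) (Q - R) = p * q / 2 := by
    have h1 := norm_sub_sq_real (P - R) (Q - R)
    rw [sub_sub_sub_cancel_right, ← dist_eq_norm, ← dist_eq_norm, ← dist_eq_norm, hQR, hPR, hPQ]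
      at h1
    linarith
  obtain ⟨φ, hφ, hφn⟩ := exists_phi ((1 / q) • (P - R)) ((1 / p) • (Q - R))
    (by rw [norm_smul, ← dist_eq_norm, hPR, Real.norm_of_nonneg (by positivity)]; field_simp)
    (by rw [norm_smul, ← dist_eq_norm, hQR, Real.norm_of_nonneg (by positivity)]; field_simp)
    (by rw [inner_smul_left, inner_smul_right, hinner]; simp; field_simp)
  have hreg : TriS 0 (0, p) (q, 0) 1 = {p | 0 ≤ p.1 ∧ 0 ≤ p.2 ∧
      ((a : ℝ) + 2 * b) * a * p.1 + (b + 2 * a) * b * p.2 ≤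
      (a + 2 * b) * (b + 2 * a) * (m * (a * b * c))} := by
    ext ⟨x, y⟩
    rw [Set.mem_ofPred_eq]
    constructor
    · rintro ⟨s, t, hs, ht, hst, h1, h2⟩
      simp at h1 h2
      subst h1 h2
      refine ⟨by simp; positivity, by simp; positivity, ?_⟩
      have : 0 ≤ ((a : ℝ) + 2 * b) * (b + 2 * a) * (m * (a * b * c)) * (1 - s - t) := by
        apply mul_nonneg (by positivity); linarith
      simp only
      rw [hp, hq]
      linarith
    · rintro ⟨h1, h2, h3⟩
      simp only at h1 h2 h3
      refine ⟨y / p, x / q, by positivity, by positivity, ?_, ?_, ?_⟩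
      · rw [div_add_div _ _ hp0.ne' hq0.ne', div_le_one (by positivity)]
        have : 0 ≤ (m * c : ℝ) * ((a + 2 * b) * (b + 2 * a) * (m * (a * b * c)) -
          (((a : ℝ) + 2 * b) * a * x + (b + 2 * a) * b * y)) := by
          apply mul_nonneg (by positivity); linarith
        rw [hp, hq]
        linarith
      · simp; field_simp
      · simp; field_simp
  rw [← hreg] at hLc
  obtain ⟨N, hN⟩ : ∃ N, N = (a + 2 * b) * (b + 2 * a) * m ^ 2 * c ^ 2 := ⟨_, rfl⟩
  have hpN : p * q = N * (a * b) := by rw [hp, hq, hN]; push_cast; ring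
  rw [← hN] at hLn ⊢
  subst hLn
  let Φ := φ.toHomeomorph.trans (Homeomorph.addLeft R)
  let T : Fin L.length → Set V2 := fun i => TriS (L.get i).1 (L.get i).2.1 (L.get i).2.2 1
  have hg : ∀ i, GoodT a b c (L.get i).2.1 (L.get i).2.2 := fun i => hLg _ (L.get_mem i)
  have hTU : TriS 0 (0, p) (q, 0) 1 = ⋃ i, T i := by
    ext x
    rw [hLc, Set.mem_iUnion]
    constructor
    · rintro ⟨t, ht, hx⟩
      obtain ⟨i, rfl⟩ := List.get_of_mem ht
      exact ⟨i, hx⟩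
    · rintro ⟨i, hx⟩
      exact ⟨_, L.get_mem i, hx⟩
  have hS : convexHull ℝ {P, Q, R} = Φ '' TriS 0 (0, p) (q, 0) 1 := by
    rw [image_triS, ← hull_triP]
    congr 1
    simp [hφ, hp0.ne', hq0.ne']
  choose f hf using fun i => exists_isom hA hB hR φ hφn (R + φ (L.get i).1) _ _ (hg i)
  have hf2 : ∀ i, f i '' TriP 0 (φ (-(a : ℝ), 0)) (φ (0, (b : ℝ))) = Φ '' T i := by
    intro i
    rw [hf, ← image_triS]
  have hsq : ∀ (x y : V2) (r : ℝ), 0 < r → NN (x - y) = r ^ 2 → dist (φ x) (φ y) = r := by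
    intro x y r hr hxy
    rw [dist_eq_norm, ← map_sub, ← sq_eq_sq₀ (norm_nonneg _) hr.le, hφn, hxy]
  refine ⟨f, TriP 0 (φ (-(a : ℝ), 0)) (φ (0, (b : ℝ))), ?_, ?_, ?_⟩
  · refine ⟨φ (0, (b : ℝ)), φ (-(a : ℝ), 0), φ 0, hsq _ _ _ hA ?_, hsq _ _ _ hB ?_, hsq _ _ _ hC ?_,
      ?_⟩
    · simp [NN]
    · simp [NN]
    · simp [NN, hR]; ring
    · rw [← hull_triP]; simp
  · simp only [hf2]
    rw [← Set.image_iUnion, ← hTU, hS]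
  · intro i j hij
    have hvol : ∀ i, MeasureTheory.volume (T i) = ENNReal.ofReal (a * b) *
        MeasureTheory.volume (TriS 0 (1, 0) (0, 1) 1) := by
      intro i
      rw [volume_tri, good_det hA hB hR (hg i)]
    have := disj_of_measure MeasureTheory.volume T _
      (ENNReal.mul_ne_top ENNReal.ofReal_ne_top (volume_tri_ne_top _ _ _)) hvol (by
        rw [← hTU, volume_tri, ← mul_assoc]
        congr 1
        rw [← ENNReal.ofReal_natCast, ← ENNReal.ofReal_mul (by positivity), ← hpN]
        simp
        rw [abs_of_pos hp0, abs_of_pos hq0, ENNReal.ofReal_mul hp0.le]) i j hij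
    rw [hf2, hf2, ← Φ.image_interior, ← Φ.image_interior, ← Set.image_inter Φ.injective, this,
      Set.image_empty]
end
end

section
/- Let a, b, c be pairwise coprime positive integers with c² = a² + b² + ab, and let m ≥ 1 be an integer. Then the triangle with side lengths ((a+2b)·m·a·b, (b+2a)·m·b², m·b·c²) tiles into (a+2b)·(b+2a)·m²·b² congruent copies of the triangle with side lengths (a, b, c). -/
noncomputable section

inductive Cov_s9 (a b c : ℝ) : Set (ℝ × ℝ) → ℝ → Prop
  | tile (z1 z2 u1 u2 v1 v2 : ℝ) (hu : u1 ^ 2 + u1 * u2 + u2 ^ 2 = a ^ 2)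
      (hv : v1 ^ 2 + v1 * v2 + v2 ^ 2 = b ^ 2)
      (hw : (u1 - v1) ^ 2 + (u1 - v1) * (u2 - v2) + (u2 - v2) ^ 2 = c ^ 2) :
      Cov_s9 a b c {p | ∃ s t : ℝ, 0 ≤ s ∧ 0 ≤ t ∧ s + t ≤ 1 ∧
        p.1 = z1 + s * u1 + t * v1 ∧ p.2 = z2 + s * u2 + t * v2} 1
  | union (S T : Set (ℝ × ℝ)) (m n : ℝ) : Cov_s9 a b c S m → Cov_s9 a b c T n →
      Cov_s9 a b c (S ∪ T) (m + n)

theorem Cov_s9.union' {a b c : ℝ} {S T U : Set (ℝ × ℝ)} {m n k : ℝ} (h1 : Cov_s9 a b c S m)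
    (h2 : Cov_s9 a b c T n) (hU : ∀ x y : ℝ, (x, y) ∈ U ↔ (x, y) ∈ S ∨ (x, y) ∈ T)
    (hk : k = m + n) : Cov_s9 a b c U k := by
  have : U = S ∪ T := by ext ⟨x, y⟩; exact hU x y
  rw [this, hk]; exact Cov_s9.union _ _ _ _ h1 h2

theorem Cov_s9.congr {a b c : ℝ} {S U : Set (ℝ × ℝ)} {m k : ℝ} (h1 : Cov_s9 a b c S m)
    (hU : ∀ x y : ℝ, (x, y) ∈ U ↔ (x, y) ∈ S)
    (hk : k = m) : Cov_s9 a b c U k := by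
  have : U = S := by ext ⟨x, y⟩; exact hU x y
  rw [this, hk]; exact h1

theorem Cov_s9.swapab {a b c : ℝ} {S : Set (ℝ × ℝ)} {m : ℝ} (h : Cov_s9 a b c S m) :
    Cov_s9 b a c S m := by
  induction h with
  | tile z1 z2 u1 u2 v1 v2 hu hv hw =>
    refine Cov_s9.congr (Cov_s9.tile z1 z2 v1 v2 u1 u2 hv hu (by linarith)) ?_ rfl
    intro x y
    constructor
    · rintro ⟨s, t, h1, h2, h3, h4, h5⟩
      exact ⟨t, s, h2, h1, by linarith, by linarith, by linarith⟩
    · rintro ⟨s, t, h1, h2, h3, h4, h5⟩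
      exact ⟨t, s, h2, h1, by linarith, by linarith, by linarith⟩
  | union S T m n _ _ h1 h2 => exact Cov_s9.union _ _ _ _ h1 h2

theorem Cov_s9.reflect {a b c : ℝ} {S : Set (ℝ × ℝ)} {m : ℝ} (h : Cov_s9 a b c S m) :
    Cov_s9 a b c {p | (p.2, p.1) ∈ S} m := by
  induction h with
  | tile z1 z2 u1 u2 v1 v2 hu hv hw =>
    refine Cov_s9.congr (Cov_s9.tile z2 z1 u2 u1 v2 v1 (by linarith) (by linarith) (by linarith)) ?_ rfl
    intro x y
    constructor
    · rintro ⟨s, t, h1, h2, h3, h4, h5⟩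
      exact ⟨s, t, h1, h2, h3, h5, h4⟩
    · rintro ⟨s, t, h1, h2, h3, h4, h5⟩
      exact ⟨s, t, h1, h2, h3, h5, h4⟩
  | union S T m n _ _ h1 h2 => exact Cov_s9.union _ _ _ _ h1 h2

def ParN (z1 z2 u1 u2 v1 v2 P R : ℝ) : Set (ℝ × ℝ) :=
  {p | ∃ s t : ℝ, 0 ≤ s ∧ s ≤ P ∧ 0 ≤ t ∧ t ≤ R ∧
        p.1 = z1 + s * u1 + t * v1 ∧ p.2 = z2 + s * u2 + t * v2}

def TriN (z1 z2 u1 u2 v1 v2 n : ℝ) : Set (ℝ × ℝ) :=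
  {p | ∃ s t : ℝ, 0 ≤ s ∧ 0 ≤ t ∧ s + t ≤ n ∧
        p.1 = z1 + s * u1 + t * v1 ∧ p.2 = z2 + s * u2 + t * v2}

section grid
variable {a b c u1 u2 v1 v2 : ℝ}

theorem cov_par11_s9 (hu : u1 ^ 2 + u1 * u2 + u2 ^ 2 = a ^ 2)
      (hv : v1 ^ 2 + v1 * v2 + v2 ^ 2 = b ^ 2)
      (hw : (u1 - v1) ^ 2 + (u1 - v1) * (u2 - v2) + (u2 - v2) ^ 2 = c ^ 2) (z1 z2 : ℝ) :
    Cov_s9 a b c (ParN z1 z2 u1 u2 v1 v2 1 1) 2 := by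
  refine Cov_s9.union' (Cov_s9.tile z1 z2 u1 u2 v1 v2 hu hv hw)
    (Cov_s9.tile (z1 + u1 + v1) (z2 + u2 + v2) (-u1) (-u2) (-v1) (-v2)
      (by linarith) (by linarith) (by linarith)) ?_ (by norm_num)
  intro x y
  constructor
  · rintro ⟨s, t, h1, h2, h3, h4, h5, h6⟩
    by_cases h : s + t ≤ 1
    · exact Or.inl ⟨s, t, h1, h3, h, h5, h6⟩
    · exact Or.inr ⟨1 - s, 1 - t, by linarith, by linarith, by linarith, by linarith, by linarith⟩
  · rintro (⟨s, t, h1, h2, h3, h5, h6⟩ | ⟨s, t, h1, h2, h3, h5, h6⟩)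
    · exact ⟨s, t, h1, by linarith, h2, by linarith, h5, h6⟩
    · exact ⟨1 - s, 1 - t, by linarith, by linarith, by linarith, by linarith,
        by linarith, by linarith⟩

theorem cov_parn1 (hu : u1 ^ 2 + u1 * u2 + u2 ^ 2 = a ^ 2)
      (hv : v1 ^ 2 + v1 * v2 + v2 ^ 2 = b ^ 2)
      (hw : (u1 - v1) ^ 2 + (u1 - v1) * (u2 - v2) + (u2 - v2) ^ 2 = c ^ 2) (n : ℕ) (hn : 1 ≤ n) :
    ∀ z1 z2 : ℝ, Cov_s9 a b c (ParN z1 z2 u1 u2 v1 v2 n 1) (2 * n) := by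
  induction n, hn using Nat.le_induction with
  | base => intro z1 z2; simpa using cov_par11_s9 hu hv hw z1 z2
  | succ n hn ih =>
    intro z1 z2
    have hn' : (1 : ℝ) ≤ n := by exact_mod_cast hn
    refine Cov_s9.union' (ih z1 z2) (cov_par11_s9 hu hv hw (z1 + n * u1) (z2 + n * u2)) ?_
      (by push_cast; ring)
    intro x y
    push_cast
    constructor
    · rintro ⟨s, t, h1, h2, h3, h4, h5, h6⟩
      by_cases h : s ≤ n
      · exact Or.inl ⟨s, t, h1, h, h3, h4, h5, h6⟩
      · exact Or.inr ⟨s - n, t, by linarith, by linarith, by linarith, by linarith,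
          by linarith, by linarith⟩
    · rintro (⟨s, t, h1, h2, h3, h4, h5, h6⟩ | ⟨s, t, h1, h2, h3, h4, h5, h6⟩)
      · exact ⟨s, t, h1, by linarith, h3, h4, h5, h6⟩
      · exact ⟨s + n, t, by linarith, by linarith, by linarith, by linarith,
          by linarith, by linarith⟩

theorem cov_par_s9 (hu : u1 ^ 2 + u1 * u2 + u2 ^ 2 = a ^ 2)
      (hv : v1 ^ 2 + v1 * v2 + v2 ^ 2 = b ^ 2)
      (hw : (u1 - v1) ^ 2 + (u1 - v1) * (u2 - v2) + (u2 - v2) ^ 2 = c ^ 2) (n m : ℕ) (hn : 1 ≤ n)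
      (hm : 1 ≤ m) :
    ∀ z1 z2 : ℝ, Cov_s9 a b c (ParN z1 z2 u1 u2 v1 v2 n m) (2 * n * m) := by
  induction m, hm using Nat.le_induction with
  | base => intro z1 z2; simpa using cov_parn1 hu hv hw n hn z1 z2
  | succ m hm ih =>
    intro z1 z2
    have hn' : (1 : ℝ) ≤ m := by exact_mod_cast hm
    refine Cov_s9.union' (ih z1 z2) (cov_parn1 hu hv hw n hn (z1 + m * v1) (z2 + m * v2)) ?_
      (by push_cast; ring)
    intro x y
    push_cast
    constructor
    · rintro ⟨s, t, h1, h2, h3, h4, h5, h6⟩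
      by_cases h : t ≤ m
      · exact Or.inl ⟨s, t, h1, h2, h3, h, h5, h6⟩
      · exact Or.inr ⟨s, t - m, by linarith, by linarith, by linarith, by linarith,
          by linarith, by linarith⟩
    · rintro (⟨s, t, h1, h2, h3, h4, h5, h6⟩ | ⟨s, t, h1, h2, h3, h4, h5, h6⟩)
      · exact ⟨s, t, h1, by linarith, h3, by linarith, h5, h6⟩
      · exact ⟨s, t + m, by linarith, by linarith, by linarith, by linarith,
          by linarith, by linarith⟩

theorem cov_tri_s9 (hu : u1 ^ 2 + u1 * u2 + u2 ^ 2 = a ^ 2)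
      (hv : v1 ^ 2 + v1 * v2 + v2 ^ 2 = b ^ 2)
      (hw : (u1 - v1) ^ 2 + (u1 - v1) * (u2 - v2) + (u2 - v2) ^ 2 = c ^ 2) (n : ℕ) (hn : 1 ≤ n) :
    ∀ z1 z2 : ℝ, Cov_s9 a b c (TriN z1 z2 u1 u2 v1 v2 n) (n ^ 2) := by
  induction n, hn using Nat.le_induction with
  | base =>
    intro z1 z2
    refine Cov_s9.congr (Cov_s9.tile z1 z2 u1 u2 v1 v2 hu hv hw) ?_ (by norm_num)
    intro x y
    rw [Nat.cast_one]
    exact Iff.rfl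
  | succ n hn ih =>
    intro z1 z2
    have hn' : (1 : ℝ) ≤ n := by exact_mod_cast hn
    have hp := cov_par_s9 hu hv hw 1 n le_rfl hn z1 z2
    have ht := Cov_s9.tile (z1 + n * v1) (z2 + n * v2) u1 u2 v1 v2 hu hv hw
    refine Cov_s9.union' (ih (z1 + u1) (z2 + u2)) (Cov_s9.union _ _ _ _ hp ht) ?_
      (by push_cast; ring)
    intro x y
    push_cast
    constructor
    · rintro ⟨s, t, h1, h2, h3, h5, h6⟩
      by_cases h : 1 ≤ s
      · exact Or.inl ⟨s - 1, t, by linarith, by linarith, by linarith,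
          by linarith, by linarith⟩
      · by_cases h' : t ≤ n
        · exact Or.inr (Or.inl ⟨s, t, h1, by linarith, h2, h', h5, h6⟩)
        · exact Or.inr (Or.inr ⟨s, t - n, h1, by linarith, by linarith, by linarith, by linarith⟩)
    · rintro (⟨s, t, h1, h2, h3, h5, h6⟩ | ⟨s, t, h1, h2, h3, h4, h5, h6⟩ |
        ⟨s, t, h1, h2, h3, h5, h6⟩)
      · exact ⟨s + 1, t, by linarith, h2, by linarith, by linarith, by linarith⟩
      · exact ⟨s, t, h1, h3, by linarith, h5, h6⟩
      · exact ⟨s, t + n, h1, by linarith, by linarith, by linarith, by linarith⟩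
end grid

/-- Large triangles given by determinant inequalities. -/
theorem cov_T {a b c : ℝ} (n : ℕ) (hn : 1 ≤ n) (z1 z2 U1 U2 V1 V2 D : ℝ)
    (hU : U1 ^ 2 + U1 * U2 + U2 ^ 2 = (n * a) ^ 2)
    (hV : V1 ^ 2 + V1 * V2 + V2 ^ 2 = (n * b) ^ 2)
    (hW : (U1 - V1) ^ 2 + (U1 - V1) * (U2 - V2) + (U2 - V2) ^ 2 = (n * c) ^ 2)
    (hD : D = U1 * V2 - U2 * V1) (hD0 : D ≠ 0) (S : Set (ℝ × ℝ))
    (hS : ∀ x y : ℝ, (x, y) ∈ S ↔ 0 ≤ D * ((x - z1) * V2 - (y - z2) * V1) ∧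
      0 ≤ D * (U1 * (y - z2) - U2 * (x - z1)) ∧
      D * ((x - z1) * V2 - (y - z2) * V1 + (U1 * (y - z2) - U2 * (x - z1))) ≤ D ^ 2) :
    Cov_s9 a b c S (n ^ 2) := by
  have hn' : (0 : ℝ) < n := by exact_mod_cast hn
  have hn0 : (n : ℝ) ≠ 0 := hn'.ne'
  refine Cov_s9.congr (cov_tri_s9 (u1 := U1 / n) (u2 := U2 / n) (v1 := V1 / n) (v2 := V2 / n)
    ?_ ?_ ?_ n hn z1 z2) ?_ rfl
  · field_simp; linarith
  · field_simp; linarith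
  · field_simp; linarith
  intro x y
  rw [hS]
  have hDD : 0 < D ^ 2 := by positivity
  constructor
  · rintro ⟨h1, h2, h3⟩
    refine ⟨n * (D * ((x - z1) * V2 - (y - z2) * V1)) / D ^ 2,
      n * (D * (U1 * (y - z2) - U2 * (x - z1))) / D ^ 2, by positivity, by positivity, ?_, ?_, ?_⟩
    · rw [← add_div, div_le_iff₀ hDD, ← mul_add, ← mul_add]
      gcongr
    · dsimp only
      field_simp
      rw [hD]; ring
    · dsimp only
      field_simp
      rw [hD]; ring
  · rintro ⟨s, t, h1, h2, h3, h4, h5⟩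
    dsimp only at h4 h5
    have e1 : (x - z1) * V2 - (y - z2) * V1 = s / n * D := by
      rw [h4, h5, hD]; field_simp; ring
    have e2 : U1 * (y - z2) - U2 * (x - z1) = t / n * D := by
      rw [h4, h5, hD]; field_simp; ring
    rw [e1, e2]
    have h6 : s / n + t / n ≤ 1 := by rw [← add_div, div_le_one hn']; exact h3
    have h7 : 0 ≤ s / n := by positivity
    have h8 : 0 ≤ t / n := by positivity
    refine ⟨?_, ?_, ?_⟩
    · have := mul_nonneg h7 hDD.le
      linarith
    · have := mul_nonneg h8 hDD.le
      linarith
    · nlinarith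

/-- rectangles in lattice coordinates -/
def Rect (x0 x1 y0 y1 : ℝ) : Set (ℝ × ℝ) := {p | x0 ≤ p.1 ∧ p.1 ≤ x1 ∧ y0 ≤ p.2 ∧ p.2 ≤ y1}

theorem cov_rect {a b c : ℝ} (ha : 0 < a) (hb : 0 < b) (h : c ^ 2 = a ^ 2 + b ^ 2 + a * b)
    (n m : ℕ) (hn : 1 ≤ n) (hm : 1 ≤ m) (x0 x1 y0 y1 : ℝ) (hx : x1 = x0 + n * a)
    (hy : y1 = y0 + m * b) : Cov_s9 a b c (Rect x0 x1 y0 y1) (2 * n * m) := by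
  refine Cov_s9.congr (cov_par_s9 (u1 := a) (u2 := 0) (v1 := 0) (v2 := -b) (by ring) (by ring)
    (by rw [h]; ring) n m hn hm x0 y1) ?_ rfl
  intro x y
  constructor
  · rintro ⟨h1, h2, h3, h4⟩
    dsimp only at *
    refine ⟨(x - x0) / a, (y1 - y) / b, ?_, ?_, ?_, ?_, ?_, ?_⟩
    · exact div_nonneg (by linarith) ha.le
    · rw [div_le_iff₀ ha]; linarith
    · exact div_nonneg (by linarith) hb.le
    · rw [div_le_iff₀ hb]; linarith
    · field_simp; ring
    · field_simp; ring
  · rintro ⟨s, t, h1, h2, h3, h4, h5, h6⟩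
    dsimp only at *
    refine ⟨?_, ?_, ?_, ?_⟩ <;> dsimp only <;> nlinarith

theorem cov_rect' {a b c : ℝ} (ha : 0 < a) (hb : 0 < b) (h : c ^ 2 = a ^ 2 + b ^ 2 + a * b)
    (n m : ℕ) (hn : 1 ≤ n) (hm : 1 ≤ m) (x0 x1 y0 y1 : ℝ) (hx : x1 = x0 + n * b)
    (hy : y1 = y0 + m * a) : Cov_s9 a b c (Rect x0 x1 y0 y1) (2 * n * m) :=
  (cov_rect hb ha (by linarith) n m hn hm x0 x1 y0 y1 hx hy).swapab

/-- rectangles of height `ab` and width `i a + j b` -/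
theorem cov_rectc {c : ℝ} (a b : ℕ) (ha : 0 < a) (hb : 0 < b)
    (h : c ^ 2 = (a : ℝ) ^ 2 + b ^ 2 + a * b)
    (i j : ℕ) (hi : 1 ≤ i) (hj : 1 ≤ j) (x0 x1 y0 y1 : ℝ) (hx : x1 = x0 + i * a + j * b)
    (hy : y1 = y0 + a * b) : Cov_s9 a b c (Rect x0 x1 y0 y1) (2 * (x1 - x0)) := by
  have ha' : (0 : ℝ) < a := by exact_mod_cast ha
  have hb' : (0 : ℝ) < b := by exact_mod_cast hb
  have hi' : (1 : ℝ) ≤ i := by exact_mod_cast hi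
  have hj' : (1 : ℝ) ≤ j := by exact_mod_cast hj
  have h1 : 0 < (i : ℝ) * a := by positivity
  have h2 : 0 < (j : ℝ) * b := by positivity
  refine Cov_s9.union' (cov_rect ha' hb' h i a hi ha x0 (x0 + i * a) y0 y1 rfl hy)
    (cov_rect' ha' hb' h j b hj hb (x0 + i * a) x1 y0 y1 hx (by linarith)) ?_ (by rw [hx]; ring)
  intro x y
  constructor
  · rintro ⟨h1, h2, h3, h4⟩
    dsimp only at *
    rcases le_total x (x0 + i * a) with h | h
    · exact Or.inl ⟨h1, h, h3, h4⟩
    · exact Or.inr ⟨h, h2, h3, h4⟩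
  · rintro (⟨h1, h2, h3, h4⟩ | ⟨h1, h2, h3, h4⟩) <;> dsimp only at *
    · exact ⟨h1, by dsimp only; linarith, h3, h4⟩
    · exact ⟨by dsimp only; linarith, h2, h3, h4⟩
section rows
variable (a b c : ℕ)

/-- triangle of scale `c` below the apex `(x0,y0)` -/
def TC (x0 y0 : ℝ) : Set (ℝ × ℝ) :=
  {p | 0 ≤ a * (p.1 - x0) + (a + b) * (p.2 - y0) ∧ b * (p.1 - x0) ≤ a * (p.2 - y0) ∧
    p.2 ≤ y0 + a * b}

theorem cov_TC (ha : 0 < a) (hb : 0 < b) (hc : 0 < c)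
    (h : (c : ℝ) ^ 2 = (a : ℝ) ^ 2 + b ^ 2 + a * b) (x0 y0 : ℝ) :
    Cov_s9 a b c (TC a b x0 y0) (c ^ 2) := by
  have ha' : (0 : ℝ) < a := by exact_mod_cast ha
  have hb' : (0 : ℝ) < b := by exact_mod_cast hb
  have hc' : (0 : ℝ) < c := by exact_mod_cast hc
  refine cov_T c hc x0 y0 (a ^ 2) (a * b) (-(b * (a + b))) (a * b) (a * b * c ^ 2)
    ?_ ?_ ?_ ?_ (by positivity) _ ?_
  · rw [mul_pow (c : ℝ), h]; ring
  · rw [mul_pow (c : ℝ), h]; ring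
  · rw [← pow_two, ← pow_mul, show 2 * 2 = 4 from rfl, show (c : ℝ) ^ 4 = (c ^ 2) ^ 2 by ring, h]
    ring
  · rw [h]; ring
  intro x y
  have e1 : (x - x0) * (a * b) - (y - y0) * (-(b * (a + b) : ℝ)) =
    b * (a * (x - x0) + (a + b) * (y - y0)) := by ring
  have e2 : (a : ℝ) ^ 2 * (y - y0) - a * b * (x - x0) = a * (a * (y - y0) - b * (x - x0)) := by ring
  have e3 : b * (a * (x - x0) + (a + b) * (y - y0)) + a * (a * (y - y0) - b * (x - x0))
     = (c : ℝ) ^ 2 * (y - y0) := by rw [h]; ring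
  rw [e1, e2, e3]
  have hK : (0 : ℝ) < a * b * c ^ 2 := by positivity
  rw [mul_nonneg_iff_of_pos_left hK, mul_nonneg_iff_of_pos_left hK,
    mul_nonneg_iff_of_pos_left ha', mul_nonneg_iff_of_pos_left hb', pow_two (_ * _),
    mul_le_mul_iff_right₀ hK, mul_comm ((a : ℝ) * b), mul_le_mul_iff_right₀ (by positivity)]
  simp only [TC, Set.mem_ofPred_eq, sub_nonneg, sub_le_iff_le_add', ]

/-- triangle of scale `n`, legs in lattice directions -/
theorem cov_TA (n : ℕ) (hn : 1 ≤ n) (ha : 0 < a) (hb : 0 < b)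
    (h : (c : ℝ) ^ 2 = (a : ℝ) ^ 2 + b ^ 2 + a * b) (x0 y0 x1 : ℝ) (hx : x1 = x0 + n * a) :
    Cov_s9 a b c {p | y0 ≤ p.2 ∧ p.1 ≤ x1 ∧ (a : ℝ) * (p.2 - y0) ≤ b * (p.1 - x0)} (n ^ 2) := by
  have ha' : (0 : ℝ) < a := by exact_mod_cast ha
  have hb' : (0 : ℝ) < b := by exact_mod_cast hb
  have hn' : (0 : ℝ) < n := by exact_mod_cast hn
  refine cov_T n hn x1 y0 (-(n * a)) 0 0 (n * b) (-(n ^ 2 * a * b))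
    (by ring) (by ring) (by rw [mul_pow _ (c : ℝ), h]; ring) (by ring)
    (neg_ne_zero.2 (by positivity)) _ ?_
  intro x y
  have e1 : -(n ^ 2 * a * b) * ((x - x1) * (n * b) - (y - y0) * 0) =
    (n ^ 3 * a * b ^ 2) * (x1 - x) := by ring
  have e2 : -(n ^ 2 * a * b) * (-(n * a) * (y - y0) - 0 * (x - x1)) =
    (n ^ 3 * a ^ 2 * b) * (y - y0) := by ring
  have e3 : (-((n : ℝ) ^ 2 * a * b)) ^ 2 - -(n ^ 2 * a * b) * ((x - x1) * (n * b) - (y - y0) * 0 +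
      (-(n * a) * (y - y0) - 0 * (x - x1))) =
    (n ^ 3 * a * b) * (b * (x - x0) - a * (y - y0)) := by rw [hx]; ring
  rw [e1, e2, ← sub_nonneg (b := -(n ^ 2 * a * b) * ((x - x1) * (n * b) - (y - y0) * 0 +
      (-(n * a) * (y - y0) - 0 * (x - x1)))), e3, mul_nonneg_iff_of_pos_left (by positivity),
    mul_nonneg_iff_of_pos_left (by positivity), mul_nonneg_iff_of_pos_left (by positivity)]
  simp only [Set.mem_ofPred_eq, sub_nonneg]
  tauto

/-- the same triangle, other half -/
theorem cov_TB (n : ℕ) (hn : 1 ≤ n) (ha : 0 < a) (hb : 0 < b)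
    (h : (c : ℝ) ^ 2 = (a : ℝ) ^ 2 + b ^ 2 + a * b) (x0 y0 y1 : ℝ) (hy : y1 = y0 + n * b) :
    Cov_s9 a b c {p | x0 ≤ p.1 ∧ p.2 ≤ y1 ∧ (b : ℝ) * (p.1 - x0) ≤ a * (p.2 - y0)} (n ^ 2) :=
  Cov_s9.congr (cov_TA b a c n hn hb ha (by linarith) y0 x0 y1 hy).swapab.reflect
    (fun _ _ => Iff.rfl) rfl

def RowA (x0 y0 x1 : ℝ) : Set (ℝ × ℝ) :=
  {p | y0 ≤ p.2 ∧ p.2 ≤ y0 + a * b ∧ 0 ≤ a * (p.1 - x0) + (a + b) * (p.2 - y0) ∧ p.1 ≤ x1}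

theorem cov_RowA (ha : 0 < a) (hb : 0 < b) (hc : 0 < c)
    (h : (c : ℝ) ^ 2 = (a : ℝ) ^ 2 + b ^ 2 + a * b) (i j : ℕ) (hi : 1 ≤ i) (hj : 1 ≤ j)
    (x0 y0 x1 : ℝ) (hx : x1 = x0 + a ^ 2 + i * a + j * b) :
    Cov_s9 a b c (RowA a b x0 y0 x1) (c ^ 2 + a ^ 2 + 2 * (x1 - (x0 + a ^ 2))) := by
  have ha' : (0 : ℝ) < a := by exact_mod_cast ha
  have hb' : (0 : ℝ) < b := by exact_mod_cast hb
  have hi' : (1 : ℝ) ≤ i := by exact_mod_cast hi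
  have hj' : (1 : ℝ) ≤ j := by exact_mod_cast hj
  have hx' : x0 + (a : ℝ) ^ 2 ≤ x1 := by
    rw [hx]
    have : 0 ≤ (i : ℝ) * a + j * b := by positivity
    linarith
  refine Cov_s9.union' (Cov_s9.union _ _ _ _ (cov_TC a b c ha hb hc h x0 y0)
    (cov_TA a b c a ha ha hb h x0 y0 (x0 + a ^ 2) (by ring)))
    (cov_rectc a b ha hb h i j hi hj (x0 + a ^ 2) x1 y0 (y0 + a * b) hx rfl) ?_ rfl
  intro x y
  simp only [RowA, TC, Rect, Set.mem_union, Set.mem_ofPred_eq]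
  constructor
  · rintro ⟨h1, h2, h3, h4⟩
    by_cases h5 : (b : ℝ) * (x - x0) ≤ a * (y - y0)
    · exact Or.inl (Or.inl ⟨h3, h5, h2⟩)
    · by_cases h6 : x ≤ x0 + (a : ℝ) ^ 2
      · exact Or.inl (Or.inr ⟨h1, h6, by linarith⟩)
      · exact Or.inr ⟨by linarith, h4, h1, h2⟩
  · rintro ((⟨h1, h2, h3⟩ | ⟨h1, h2, h3⟩) | ⟨h1, h2, h3, h4⟩)
    · refine ⟨?_, h3, h1, ?_⟩
      · by_contra hlt
        have h5 : (a : ℝ) * (a * (y - y0)) < 0 := by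
          have : y - y0 < 0 := by linarith
          have := mul_neg_of_pos_of_neg ha' this
          exact mul_neg_of_pos_of_neg ha' this
        have h6 : (b : ℝ) * (a + b) * (y - y0) < 0 :=
          mul_neg_of_pos_of_neg (by positivity) (by linarith)
        nlinarith
      · have : (b : ℝ) * (x - x0) ≤ b * a ^ 2 := by nlinarith
        have := le_of_mul_le_mul_left this hb'
        linarith
    · refine ⟨h1, ?_, ?_, by linarith⟩
      · have : (a : ℝ) * (y - y0) ≤ a * (a * b) := by nlinarith
        have := le_of_mul_le_mul_left this ha'
        linarith
      · have h4 : 0 ≤ (b : ℝ) * (x - x0) := le_trans (mul_nonneg ha'.le (by linarith)) h3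
        have h5 := (mul_nonneg_iff_of_pos_left hb').1 h4
        have : 0 ≤ y - y0 := by linarith
        positivity
    · refine ⟨h3, h4, ?_, h2⟩
      have h5 : 0 ≤ x - x0 := by nlinarith
      have : 0 ≤ y - y0 := by linarith
      positivity

/-- finite unions -/
theorem cov_iUnion {a b c : ℝ} (R : ℕ → Set (ℝ × ℝ)) (f : ℕ → ℝ) (S : Set (ℝ × ℝ)) (s : ℝ)
    (hS : Cov_s9 a b c S s) (n : ℕ) (hR : ∀ j < n, Cov_s9 a b c (R j) (f j)) :
    Cov_s9 a b c (S ∪ {p | ∃ j < n, p ∈ R j}) (s + ∑ j ∈ Finset.range n, f j) := by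
  induction n with
  | zero => simpa using hS
  | succ n ih =>
    refine Cov_s9.union' (ih fun j hj => hR j (by omega)) (hR n (by omega)) ?_
      (by rw [Finset.sum_range_succ]; ring)
    intro x y
    simp only [Set.mem_union, Set.mem_ofPred_eq, Nat.lt_succ_iff_lt_or_eq]
    constructor
    · rintro (h | ⟨j, h | rfl, h'⟩)
      · exact Or.inl (Or.inl h)
      · exact Or.inl (Or.inr ⟨j, h, h'⟩)
      · exact Or.inr h'
    · rintro ((h | ⟨j, h, h'⟩) | h)
      · exact Or.inl h
      · exact Or.inr ⟨j, Or.inl h, h'⟩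
      · exact Or.inr ⟨n, Or.inr rfl, h⟩
end rows
def SS (a b k : ℝ) : Set (ℝ × ℝ) :=
  {p | p.1 ≤ k * a * b ∧ p.2 ≤ k * a * b ∧
    -(k * a * b * (a ^ 2 + b ^ 2 + a * b)) ≤ a * (a + 2 * b) * p.1 + b * (2 * a + b) * p.2}

theorem exists_row (s y : ℝ) (k : ℕ) (hs : 0 < s) (h1 : s < y) (h2 : y ≤ k * s) :
    ∃ j < k - 1, ((j : ℝ) + 1) * s ≤ y ∧ y ≤ ((j : ℝ) + 1) * s + s := by
  have hc : 1 < ⌈y / s⌉₊ := by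
    rw [Nat.lt_ceil, Nat.cast_one, lt_div_iff₀ hs]; linarith
  have hk : ⌈y / s⌉₊ ≤ k := by
    rw [Nat.ceil_le, div_le_iff₀ hs]; exact h2
  obtain ⟨j, hj⟩ : ∃ j, ⌈y / s⌉₊ = j + 2 := ⟨⌈y / s⌉₊ - 2, by omega⟩
  refine ⟨j, by omega, ?_, ?_⟩
  · have : j + 1 < ⌈y / s⌉₊ := by omega
    rw [Nat.lt_ceil, lt_div_iff₀ hs] at this
    push_cast at this
    exact this.le
  · have : ⌈y / s⌉₊ ≤ j + 2 := by omega
    rw [Nat.ceil_le, div_le_iff₀ hs] at this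
    push_cast at this
    linarith

theorem cov_AIB (a b c k : ℕ) (ha : 0 < a) (hb : 0 < b) (hc : 0 < c) (hk : 0 < k)
    (h : (c : ℝ) ^ 2 = (a : ℝ) ^ 2 + b ^ 2 + a * b) :
    Cov_s9 a b c {p | a * p.1 + (a + b) * p.2 ≤ 0 ∧ (a + b) * p.1 + b * p.2 ≤ 0 ∧
      -((k : ℝ) * a * b * (a ^ 2 + b ^ 2 + a * b)) ≤
        a * (a + 2 * b) * p.1 + b * (2 * a + b) * p.2} ((k * c) ^ 2) := by
  have ha' : (0 : ℝ) < a := by exact_mod_cast ha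
  have hb' : (0 : ℝ) < b := by exact_mod_cast hb
  have hc' : (0 : ℝ) < c := by exact_mod_cast hc
  have hk' : (0 : ℝ) < k := by exact_mod_cast hk
  have := cov_T (a := a) (b := b) (c := c) (k * c) (Nat.mul_pos hk hc) 0 0
    (k * a * b) (-(k * a * (a + b))) (-(k * b * (a + b))) (k * a * b)
    (-(k ^ 2 * a * b * c ^ 2)) ?_ ?_ ?_ ?_ (neg_ne_zero.2 (by positivity))
    {p | a * p.1 + (a + b) * p.2 ≤ 0 ∧ (a + b) * p.1 + b * p.2 ≤ 0 ∧
      -((k : ℝ) * a * b * (a ^ 2 + b ^ 2 + a * b)) ≤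
        a * (a + 2 * b) * p.1 + b * (2 * a + b) * p.2} ?_
  · push_cast at this; exact this
  · push_cast; rw [show ((k:ℝ)*c*a)^2 = k^2*c^2*a^2 by ring, h]; ring
  · push_cast; rw [show ((k:ℝ)*c*b)^2 = k^2*c^2*b^2 by ring, h]; ring
  · push_cast
    rw [show ((k : ℝ) * c * c) ^ 2 = k ^ 2 * (c ^ 2) ^ 2 by ring, h]; ring
  · rw [h]; ring
  intro x y
  have e1 : -((k : ℝ) ^ 2 * a * b * c ^ 2) * ((x - 0) * (k * a * b) - (y - 0) * -(k * b * (a + b)))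
    = (k ^ 3 * a * b ^ 2 * c ^ 2) * -(a * x + (a + b) * y) := by ring
  have e2 : -((k : ℝ) ^ 2 * a * b * c ^ 2) * (k * a * b * (y - 0) - -(k * a * (a + b)) * (x - 0))
    = (k ^ 3 * a ^ 2 * b * c ^ 2) * -((a + b) * x + b * y) := by ring
  have e3 : (-((k : ℝ) ^ 2 * a * b * c ^ 2)) ^ 2 - -((k : ℝ) ^ 2 * a * b * c ^ 2) *
    ((x - 0) * (k * a * b) - (y - 0) * -(k * b * (a + b)) +
      (k * a * b * (y - 0) - -(k * a * (a + b)) * (x - 0)))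
    = (k ^ 3 * a * b * c ^ 2) * (a * (a + 2 * b) * x + b * (2 * a + b) * y
      - -((k : ℝ) * a * b * (a ^ 2 + b ^ 2 + a * b))) := by
    rw [← h]; ring
  rw [e1, e2, ← sub_nonneg (b := -((k : ℝ) ^ 2 * a * b * c ^ 2) * _), e3,
    mul_nonneg_iff_of_pos_left (by positivity),
    mul_nonneg_iff_of_pos_left (by positivity), mul_nonneg_iff_of_pos_left (by positivity)]
  simp only [Set.mem_ofPred_eq, sub_nonneg, neg_nonneg]

theorem sum_lin (α β : ℝ) (n : ℕ) :
    ∑ j ∈ Finset.range n, (α + β * ((j : ℝ) + 1)) = n * α + β * (n * (n + 1) / 2) := by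
  induction n with
  | zero => simp
  | succ n ih => rw [Finset.sum_range_succ, ih]; push_cast; ring

theorem cov_main (a b c k : ℕ) (ha : 0 < a) (hb : 0 < b) (hc : 0 < c) (hk : 0 < k)
    (h : (c : ℝ) ^ 2 = (a : ℝ) ^ 2 + b ^ 2 + a * b) (hab : a < b) (hkb : b < k * a) :
    Cov_s9 a b c (SS a b k) ((a + 2 * b) * (b + 2 * a) * k ^ 2) := by
  have ha' : (0 : ℝ) < a := by exact_mod_cast ha
  have hb' : (0 : ℝ) < b := by exact_mod_cast hb
  have hk' : (0 : ℝ) < k := by exact_mod_cast hk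
  have hk1 : (1 : ℝ) ≤ k := by exact_mod_cast hk
  have hab' : (a : ℝ) < b := by exact_mod_cast hab
  have hkb' : (b : ℝ) < k * a := by exact_mod_cast hkb
  have hs : (0 : ℝ) < a * b := by positivity
  have hh : (c : ℝ) ^ 2 = (b : ℝ) ^ 2 + a ^ 2 + b * a := by linarith
  have P1 := cov_AIB a b c k ha hb hc hk h
  have P2 := cov_TC a b c ha hb hc h 0 0
  have P3 := (cov_TC b a c hb ha hc hh 0 0).swapab.reflect
  have P4 := cov_TB a b c (b - a) (by omega) ha hb h (a ^ 2) (a * b) (b ^ 2)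
    (by push_cast [hab.le]; ring)
  have P5 := cov_rect ha' hb' h a (b - a) ha (by omega) 0 (a ^ 2) (a * b) (b ^ 2)
    (by ring) (by push_cast [hab.le]; ring)
  have P6 := cov_rect ha' hb' h b (k * a - b) hb (by omega) 0 (a * b) (b ^ 2) (k * a * b)
    (by ring) (by push_cast [hkb.le]; ring)
  have PA : ∀ j < k - 1, Cov_s9 a b c
      (RowA a b (-(((j : ℝ) + 1) * b * (a + b))) (((j : ℝ) + 1) * (a * b)) 0)
      ((c ^ 2 - a ^ 2) + 2 * b * (a + b) * ((j : ℝ) + 1)) := by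
    intro j hj
    have hjb : b ≤ (j + 1) * b := Nat.le_mul_of_pos_left b (by omega)
    refine Cov_s9.congr (cov_RowA a b c ha hb hc h ((j + 1) * b - a) ((j + 1) * b) (by omega)
      (by omega) _ _ _ ?_) (fun _ _ => Iff.rfl) (by ring)
    push_cast [hab.le.trans hjb]
    ring
  have PB : ∀ j < k - 1, Cov_s9 a b c
      {p | (p.2, p.1) ∈ RowA b a (-(((j : ℝ) + 1) * a * (a + b))) (((j : ℝ) + 1) * (a * b))
        (k * a * b)}
      ((c ^ 2 - b ^ 2 + 2 * k * a * b) + 2 * a * (a + b) * ((j : ℝ) + 1)) := by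
    intro j hj
    refine Cov_s9.congr (cov_RowA b a c hb ha hc hh (k * a - b) ((j + 1) * (a + b)) (by omega)
      (Nat.mul_pos (by omega) (by omega)) (-(((j : ℝ) + 1) * a * (a + b)))
      (((j : ℝ) + 1) * (a * b)) (k * a * b) ?_).swapab.reflect
      (fun _ _ => Iff.rfl) (by ring)
    push_cast [hkb.le]
    ring
  have Q1 := cov_iUnion _ _ _ _ (Cov_s9.union _ _ _ _ P1 (Cov_s9.union _ _ _ _ P2
    (Cov_s9.union _ _ _ _ P3 (Cov_s9.union _ _ _ _ P4 (Cov_s9.union _ _ _ _ P5 P6))))) (k - 1) PA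
  have Q2 := cov_iUnion _ _ _ _ Q1 (k - 1) PB
  clear P1 P2 P3 P4 P5 P6 PA PB Q1
  refine Cov_s9.congr Q2 ?_ ?_
  swap
  · rw [sum_lin, sum_lin]
    have : 1 ≤ k := hk
    push_cast [hab.le, hkb.le, this]
    rw [mul_pow, h]
    ring
  clear Q2
  -- the two key half-plane facts
  have K1 : ∀ x y : ℝ, 0 ≤ a * x + (a + b) * y → y ≤ k * a * b →
      -((k : ℝ) * a * b * (a ^ 2 + b ^ 2 + a * b)) ≤
        a * (a + 2 * b) * x + b * (2 * a + b) * y := by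
    intro x y h1 h2
    have e : a * (a + 2 * b) * x + b * (2 * a + b) * y = (a + 2 * b) * (a * x + (a + b) * y)
      - (a ^ 2 + b ^ 2 + a * b) * y := by ring
    have h3 : 0 ≤ ((a : ℝ) + 2 * b) * (a * x + (a + b) * y) := by positivity
    have h4 : ((a : ℝ) ^ 2 + b ^ 2 + a * b) * y ≤ (a ^ 2 + b ^ 2 + a * b) * (k * a * b) := by
      gcongr
    linarith
  have K2 : ∀ x y : ℝ, 0 ≤ (a + b) * x + b * y → x ≤ k * a * b →
      -((k : ℝ) * a * b * (a ^ 2 + b ^ 2 + a * b)) ≤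
        a * (a + 2 * b) * x + b * (2 * a + b) * y := by
    intro x y h1 h2
    have e : a * (a + 2 * b) * x + b * (2 * a + b) * y = (2 * a + b) * ((a + b) * x + b * y)
      - (a ^ 2 + b ^ 2 + a * b) * x := by ring
    have h3 : 0 ≤ (2 * (a : ℝ) + b) * ((a + b) * x + b * y) := by positivity
    have h4 : ((a : ℝ) ^ 2 + b ^ 2 + a * b) * x ≤ (a ^ 2 + b ^ 2 + a * b) * (k * a * b) := by
      gcongr
    linarith
  have hkab : (a : ℝ) * b ≤ k * a * b := by nlinarith
  have hb2 : (b : ℝ) ^ 2 ≤ k * a * b := by nlinarith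
  have haa : (a : ℝ) ^ 2 ≤ a * b := by nlinarith
  have hbb : (a : ℝ) * b ≤ b ^ 2 := by nlinarith
  intro x y
  simp only [SS, RowA, TC, Rect, Set.mem_union, Set.mem_ofPred_eq, sub_zero, zero_add]
  constructor
  · rintro ⟨hx, hy, hL⟩
    have rowB : (a : ℝ) * b < x → 0 ≤ (a + b) * x + b * y → ∃ j < k - 1,
        (j + 1) * (a * b : ℝ) ≤ x ∧ x ≤ (j + 1) * (a * b) + b * a ∧
        0 ≤ (b : ℝ) * (y - -((j + 1) * a * (a + b))) + (b + a) * (x - (j + 1) * (a * b)) ∧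
        y ≤ k * a * b := by
      intro h1 h2
      obtain ⟨j, hj, h3, h4⟩ := exists_row (a * b) x k hs h1 (by linarith)
      exact ⟨j, hj, h3, by linarith, by linarith, hy⟩
    have rowA : (a : ℝ) * b < y → 0 ≤ a * x + (a + b) * y → x ≤ 0 → ∃ j < k - 1,
        (j + 1) * (a * b : ℝ) ≤ y ∧ y ≤ (j + 1) * (a * b) + a * b ∧
        0 ≤ (a : ℝ) * (x - -((j + 1) * b * (a + b))) + (a + b) * (y - (j + 1) * (a * b)) ∧
        x ≤ 0 := by
      intro h1 h2 h0
      obtain ⟨j, hj, h3, h4⟩ := exists_row (a * b) y k hs h1 (by linarith)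
      exact ⟨j, hj, h3, by linarith, by linarith, h0⟩
    by_cases hpq : a * x + (a + b) * y ≤ 0 ∧ (a + b) * x + b * y ≤ 0
    · exact Or.inl (Or.inl (Or.inl ⟨hpq.1, hpq.2, hL⟩))
    rcases le_total (a * y) (b * x) with hr | hr
    · -- B side
      have hq : 0 ≤ (a + b) * x + b * y := by
        by_contra hq
        exact hpq ⟨by linarith, by linarith⟩
      rcases le_or_gt x (a * b) with hx1 | hx1
      · exact Or.inl (Or.inl (Or.inr (Or.inr (Or.inl ⟨by linarith, hr, by linarith⟩))))
      · exact Or.inr (rowB hx1 hq)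
    · have hp : 0 ≤ a * x + (a + b) * y := by
        by_contra hp
        exact hpq ⟨by linarith, by linarith⟩
      rcases le_or_gt y (a * b) with hy1 | hy1
      · exact Or.inl (Or.inl (Or.inr (Or.inl ⟨hp, hr, hy1⟩)))
      rcases le_total x 0 with hx0 | hx0
      · exact Or.inl (Or.inr (rowA hy1 hp hx0))
      have hy0 : 0 ≤ y := by linarith
      rcases le_total y (b ^ 2) with hy2 | hy2
      · rcases le_total x (a ^ 2) with hx1 | hx1
        · exact Or.inl (Or.inl (Or.inr (Or.inr (Or.inr (Or.inr (Or.inl ⟨hx0, hx1, hy1.le, hy2⟩))))))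
        · exact Or.inl (Or.inl (Or.inr (Or.inr (Or.inr (Or.inl ⟨hx1, hy2, by linarith⟩)))))
      · rcases le_or_gt x (a * b) with hx1 | hx1
        · exact Or.inl (Or.inl (Or.inr (Or.inr (Or.inr (Or.inr (Or.inr ⟨hx0, hx1, hy2, hy⟩))))))
        · exact Or.inr (rowB hx1 (by positivity))
  · have hjk : ∀ j : ℕ, j < k - 1 → ((j : ℝ) + 1) * (a * b) + a * b ≤ k * a * b := by
      intro j hj
      have : ((j + 2 : ℕ) : ℝ) ≤ k := by exact_mod_cast (by omega : j + 2 ≤ k)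
      push_cast at this
      nlinarith
    have hj0 : ∀ j : ℕ, 0 ≤ ((j : ℝ) + 1) * (a * b) := fun j => by positivity
    rintro (((⟨h1, h2, h3⟩ | ⟨h1, h2, h3⟩ | ⟨h1, h2, h3⟩ | ⟨h1, h2, h3⟩ | ⟨h1, h2, h3, h4⟩ |
      ⟨h1, h2, h3, h4⟩) | ⟨j, hj, h1, h2, h3, h4⟩) | ⟨j, hj, h1, h2, h3, h4⟩)
    · -- AIB
      have hC : (0 : ℝ) < a ^ 2 + b ^ 2 + a * b := by positivity
      refine ⟨?_, ?_, h3⟩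
      · have : (a ^ 2 + b ^ 2 + a * b) * x ≤ (a ^ 2 + b ^ 2 + a * b) * (k * a * b) := by
          have : (2 * (a : ℝ) + b) * ((a + b) * x + b * y) ≤ 0 :=
            mul_nonpos_of_nonneg_of_nonpos (by positivity) h2
          linarith
        exact le_of_mul_le_mul_left this hC
      · have : (a ^ 2 + b ^ 2 + a * b) * y ≤ (a ^ 2 + b ^ 2 + a * b) * (k * a * b) := by
          have : ((a : ℝ) + 2 * b) * (a * x + (a + b) * y) ≤ 0 :=
            mul_nonpos_of_nonneg_of_nonpos (by positivity) h1
          linarith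
        exact le_of_mul_le_mul_left this hC
    · have hy : y ≤ k * a * b := by linarith
      refine ⟨?_, hy, K1 x y h1 hy⟩
      have : (b : ℝ) * x ≤ b * (k * a * b) := by nlinarith
      exact le_of_mul_le_mul_left this hb'
    · have hx : x ≤ k * a * b := by linarith
      refine ⟨hx, ?_, K2 x y (by linarith) hx⟩
      have : (a : ℝ) * y ≤ a * (k * a * b) := by nlinarith
      exact le_of_mul_le_mul_left this ha'
    · have hy : y ≤ k * a * b := by linarith
      have hx0 : 0 ≤ x := by nlinarith
      have hy0 : 0 ≤ y := by
        have : 0 ≤ (a : ℝ) * y := by nlinarith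
        exact (mul_nonneg_iff_of_pos_left ha').1 this
      refine ⟨?_, hy, K1 x y (by positivity) hy⟩
      have : (b : ℝ) * x ≤ b * (a * b) := by nlinarith
      have := le_of_mul_le_mul_left this hb'
      linarith
    · have hy0 : 0 ≤ y := by linarith
      exact ⟨by linarith, by linarith, K1 x y (by positivity) (by linarith)⟩
    · have hy0 : 0 ≤ y := by nlinarith
      exact ⟨by linarith, by linarith, K1 x y (by positivity) (by linarith)⟩
    · have := hjk j hj
      have := hj0 j
      exact ⟨by linarith, by linarith, K1 x y (by linarith) (by linarith)⟩
    · have := hjk j hj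
      have := hj0 j
      exact ⟨by linarith, by linarith, K2 x y (by linarith) (by linarith)⟩

theorem cov_final (a b c m : ℕ) (ha : 0 < a) (hb : 0 < b) (hc : 0 < c) (hm : 0 < m)
    (hab : Nat.Coprime a b) (h : c ^ 2 = a ^ 2 + b ^ 2 + a * b) :
    Cov_s9 a b c (SS a b ((m * b : ℕ) : ℝ)) ((a + 2 * b) * (b + 2 * a) * ((m * b : ℕ) : ℝ) ^ 2) := by
  have h' : (c : ℝ) ^ 2 = (a : ℝ) ^ 2 + b ^ 2 + a * b := by exact_mod_cast h
  -- the larger of `a, b` is less than the square of the smaller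
  have key : ∀ a b : ℕ, 0 < a → c ^ 2 = a ^ 2 + b ^ 2 + a * b → a < b → b < a ^ 2 := by
    intro a b ha h hab
    have hbc : b < c := by nlinarith
    obtain ⟨d, rfl⟩ : ∃ d, c = b + d := ⟨c - b, by omega⟩
    have hd : 0 < d := by omega
    have h1 : 2 * b * d + d ^ 2 = a ^ 2 + a * b := by nlinarith
    have h2 : a + 1 ≤ 2 * d := by
      by_contra hcon
      have : 2 * d ≤ a := by omega
      nlinarith
    nlinarith
  rcases lt_trichotomy a b with hlt | heq | hgt
  · refine cov_main a b c (m * b) ha hb hc (Nat.mul_pos hm hb) h' hlt ?_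
    have hb1 : a ≠ 1 := by
      rintro rfl
      have := key 1 b one_pos h hlt
      omega
    have : 2 ≤ a := by omega
    have : b ≤ m * b := Nat.le_mul_of_pos_left b hm
    nlinarith
  · exfalso
    subst heq
    have : a = 1 := by simpa using hab
    subst this
    have : c < 2 := by nlinarith
    interval_cases c <;> omega
  · have hk := key b a hb (by linarith) hgt
    have := cov_main b a c (m * b) hb ha hc (Nat.mul_pos hm hb) (by linarith) hgt (by nlinarith)
    refine Cov_s9.congr this.swapab.reflect ?_ (by ring)
    intro x y
    simp only [SS, Set.mem_ofPred_eq]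
    constructor
    · rintro ⟨h1, h2, h3⟩
      exact ⟨by linarith, by linarith, by linarith⟩
    · rintro ⟨h1, h2, h3⟩
      exact ⟨by linarith, by linarith, by linarith⟩

open MeasureTheory in
theorem disj_of_area {N : ℕ} (K : Fin N → Set Plane) (v : ENNReal) (hv : v ≠ ⊤)
    (hK : ∀ i, volume (K i) = v) (hU : volume (⋃ i, K i) = N * v) (i j : Fin N) (hij : i ≠ j) :
    interior (K i) ∩ interior (K j) = ∅ := by
  classical
  set U := interior (K i) ∩ interior (K j) with hUdef
  have hUo : IsOpen U := isOpen_interior.inter isOpen_interior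
  have hUj : U ⊆ K j := fun x hx => interior_subset hx.2
  have hUi : U ⊆ K i := fun x hx => interior_subset hx.1
  let K' : Fin N → Set Plane := fun l => if l = j then K j \ U else K l
  have hsub : (⋃ l, K l) ⊆ ⋃ l, K' l := by
    intro x hx
    obtain ⟨l, hl⟩ := Set.mem_iUnion.1 hx
    by_cases hxU : x ∈ U
    · refine Set.mem_iUnion.2 ⟨i, ?_⟩
      simp only [K', if_neg hij]
      exact hUi hxU
    · refine Set.mem_iUnion.2 ⟨l, ?_⟩
      by_cases hlj : l = j
      · subst hlj
        simp only [K', if_true]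
        exact ⟨hl, hxU⟩
      · simp only [K', if_neg hlj]
        exact hl
  have h1 : volume (K j \ U) + volume U = v := by
    have := measure_inter_add_sdiff (μ := volume) (K j) hUo.measurableSet
    rw [Set.inter_eq_self_of_subset_right hUj, hK] at this
    rw [add_comm]; exact this
  have h2 : (N : ENNReal) * v ≤ ∑ l, volume (K' l) := by
    rw [← hU]
    exact (measure_mono hsub).trans (measure_iUnion_fintype_le _ _)
  have h3 : ∑ l, volume (K' l) + volume U = N * v := by
    rw [← Finset.add_sum_erase _ _ (Finset.mem_univ j)]
    have : ∑ l ∈ Finset.univ.erase j, volume (K' l) = ∑ l ∈ Finset.univ.erase j, v := by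
      refine Finset.sum_congr rfl fun l hl => ?_
      simp only [K', if_neg (Finset.ne_of_mem_erase hl), hK]
    rw [this]
    have e : volume (K' j) = volume (K j \ U) := by simp only [K', if_true]
    rw [e, add_right_comm, h1, Finset.add_sum_erase _ (fun _ => v) (Finset.mem_univ j)]
    simp
  have h4 : volume U = 0 := by
    have hne : (N : ENNReal) * v ≠ ⊤ := ENNReal.mul_ne_top (by simp) hv
    have h5 : (N : ENNReal) * v + volume U ≤ N * v + 0 := by
      rw [add_zero]
      calc (N : ENNReal) * v + volume U ≤ ∑ l, volume (K' l) + volume U := by gcongr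
        _ = _ := h3
    exact le_antisymm ((ENNReal.add_le_add_iff_left hne).1 h5) (zero_le)
  exact (hUo.measure_eq_zero_iff volume).1 h4

/-- the triangle with a vertex `z` and edge vectors `u`, `v` -/
def Tri (z u v : Plane) : Set Plane :=
  {x | ∃ s t : ℝ, 0 ≤ s ∧ 0 ≤ t ∧ s + t ≤ 1 ∧ x = z + s • u + t • v}

theorem Tri_swap (z u v : Plane) : Tri z u v = Tri z v u := by
  ext x
  constructor
  · rintro ⟨s, t, h1, h2, h3, rfl⟩
    exact ⟨t, s, h2, h1, by linarith, by abel⟩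
  · rintro ⟨s, t, h1, h2, h3, rfl⟩
    exact ⟨t, s, h2, h1, by linarith, by abel⟩

theorem hull_eq_Tri (P Q R : Plane) : convexHull ℝ {P, Q, R} = Tri R (Q - R) (P - R) := by
  apply Set.Subset.antisymm
  · apply convexHull_min
    · intro x hx
      rcases hx with rfl | rfl | rfl
      · exact ⟨0, 1, by norm_num, by norm_num, by norm_num, by simp⟩
      · exact ⟨1, 0, by norm_num, by norm_num, by norm_num, by simp⟩
      · exact ⟨0, 0, by norm_num, by norm_num, by norm_num, by simp⟩
    · rintro x ⟨s, t, h1, h2, h3, rfl⟩ y ⟨s', t', h1', h2', h3', rfl⟩ p q hp hq hpq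
      refine ⟨p * s + q * s', p * t + q * t', by positivity, by positivity, by nlinarith, ?_⟩
      obtain rfl : q = 1 - p := by linarith
      module
  · rintro x ⟨s, t, h1, h2, h3, rfl⟩
    have hc := convex_convexHull ℝ ({P, Q, R} : Set Plane)
    have hP : P ∈ convexHull ℝ ({P, Q, R} : Set Plane) := subset_convexHull _ _ (by simp)
    have hQ : Q ∈ convexHull ℝ ({P, Q, R} : Set Plane) := subset_convexHull _ _ (by simp)
    have hR : R ∈ convexHull ℝ ({P, Q, R} : Set Plane) := subset_convexHull _ _ (by simp)
    have := hc.sum_mem (t := Finset.univ) (w := ![t, s, 1 - s - t]) (z := ![P, Q, R])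
      (by intro i _; fin_cases i <;> simp <;> linarith)
      (by simp [Fin.sum_univ_three]; ring)
      (by intro i _; fin_cases i <;> simpa)
    simp only [Fin.sum_univ_three, Matrix.cons_val] at this
    convert this using 1
    module

theorem Tri_image (G : Plane →ₗ[ℝ] Plane) (z u v : Plane) :
    G '' Tri z u v = Tri (G z) (G u) (G v) := by
  ext x
  constructor
  · rintro ⟨_, ⟨s, t, h1, h2, h3, rfl⟩, rfl⟩
    exact ⟨s, t, h1, h2, h3, by simp⟩
  · rintro ⟨s, t, h1, h2, h3, rfl⟩
    exact ⟨_, ⟨s, t, h1, h2, h3, rfl⟩, by simp⟩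

theorem Tri_add (z w u v : Plane) : (fun x => z + x) '' Tri w u v = Tri (z + w) u v := by
  ext x
  constructor
  · rintro ⟨_, ⟨s, t, h1, h2, h3, rfl⟩, rfl⟩
    exact ⟨s, t, h1, h2, h3, by simp only [add_assoc]⟩
  · rintro ⟨s, t, h1, h2, h3, rfl⟩
    exact ⟨_, ⟨s, t, h1, h2, h3, rfl⟩, by simp only [add_assoc]⟩

theorem vol_Tri_z (z u v : Plane) :
    MeasureTheory.volume (Tri z u v) = MeasureTheory.volume (Tri 0 u v) := by
  have := Tri_add z 0 u v
  rw [add_zero] at this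
  rw [← this, Set.image_add_left, MeasureTheory.measure_preimage_add]

theorem vol_Tri_fin (z u v : Plane) : MeasureTheory.volume (Tri z u v) ≠ ⊤ := by
  have : Tri z u v = convexHull ℝ {z + v, z + u, z} := by
    rw [hull_eq_Tri]; simp
  rw [this]
  have hf : ({z + v, z + u, z} : Set Plane).Finite := by simp
  exact (hf.isCompact_convexHull ℝ).measure_lt_top.ne

structure Frame (e₁ e₂ : Plane) : Prop where
  h1 : inner ℝ e₁ e₁ = 1
  h2 : inner ℝ e₂ e₂ = 1
  h12 : inner ℝ e₁ e₂ = 1 / 2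

theorem Frame.inner {e₁ e₂ : Plane} (F : Frame e₁ e₂) (x y x' y' : ℝ) :
    Inner.inner ℝ (x • e₁ + y • e₂) (x' • e₁ + y' • e₂)
      = x * x' + (x * y' + y * x') / 2 + y * y' := by
  have h21 : Inner.inner ℝ e₂ e₁ = (1 / 2 : ℝ) := by rw [real_inner_comm]; exact F.h12
  simp only [inner_add_left, inner_add_right, real_inner_smul_left, real_inner_smul_right,
    F.h1, F.h2, F.h12, h21]
  ring

theorem Frame.normsq {e₁ e₂ : Plane} (F : Frame e₁ e₂) (x y : ℝ) :
    ‖x • e₁ + y • e₂‖ ^ 2 = x ^ 2 + x * y + y ^ 2 := by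
  rw [← real_inner_self_eq_norm_sq, F.inner]; ring

theorem Frame.linInd {e₁ e₂ : Plane} (F : Frame e₁ e₂) : LinearIndependent ℝ ![e₁, e₂] := by
  rw [LinearIndependent.pair_iff]
  intro s t h
  have := F.normsq s t
  rw [h] at this
  simp only [norm_zero] at this
  have hs : s ^ 2 = 0 := by nlinarith [sq_nonneg (s + 2 * t), sq_nonneg s]
  have ht : t ^ 2 = 0 := by nlinarith [sq_nonneg (2 * s + t), sq_nonneg t]
  exact ⟨by simpa using hs, by simpa using ht⟩

theorem Frame.exists_basis {e₁ e₂ : Plane} (F : Frame e₁ e₂) :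
    ∃ B : Module.Basis (Fin 2) ℝ Plane, B 0 = e₁ ∧ B 1 = e₂ := by
  refine ⟨basisOfLinearIndependentOfCardEqFinrank F.linInd (by simp), ?_, ?_⟩ <;> simp

theorem Frame.exists_coord {e₁ e₂ : Plane} (F : Frame e₁ e₂) (v : Plane) :
    ∃ x y : ℝ, v = x • e₁ + y • e₂ := by
  obtain ⟨B, h1, h2⟩ := F.exists_basis
  refine ⟨B.repr v 0, B.repr v 1, ?_⟩
  conv_lhs => rw [← B.sum_repr v]
  rw [Fin.sum_univ_two, h1, h2]

theorem Frame.exists_isom {e₁ e₂ w₁ w₂ : Plane} (F : Frame e₁ e₂) (W : Frame w₁ w₂) :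
    ∃ g : Plane ≃ₗᵢ[ℝ] Plane, g e₁ = w₁ ∧ g e₂ = w₂ := by
  obtain ⟨B, h1, h2⟩ := F.exists_basis
  let G : Plane →ₗ[ℝ] Plane := B.constr ℝ ![w₁, w₂]
  have g1 : G e₁ = w₁ := by rw [← h1]; simp [G]
  have g2 : G e₂ = w₂ := by rw [← h2]; simp [G]
  have hn : ∀ v, ‖G v‖ = ‖v‖ := by
    intro v
    obtain ⟨x, y, rfl⟩ := F.exists_coord v
    rw [map_add, map_smul, map_smul, g1, g2]
    have := (W.normsq x y).trans (F.normsq x y).symm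
    exact (sq_eq_sq₀ (norm_nonneg _) (norm_nonneg _)).1 this
  exact ⟨LinearIsometry.toLinearIsometryEquiv ⟨G, hn⟩ rfl, g1, g2⟩

theorem Frame.exists_diag {e₁ e₂ : Plane} (F : Frame e₁ e₂) (p q : ℝ) :
    ∃ G : Plane →ₗ[ℝ] Plane, G e₁ = p • e₁ ∧ G e₂ = q • e₂ ∧ LinearMap.det G = p * q := by
  obtain ⟨B, h1, h2⟩ := F.exists_basis
  refine ⟨Matrix.toLin B B (Matrix.diagonal ![p, q]), ?_, ?_, ?_⟩
  · rw [← h1, Matrix.toLin_self]; simp [Matrix.diagonal]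
  · rw [← h2, Matrix.toLin_self]; simp [Matrix.diagonal]
  · rw [LinearMap.det_toLin]; simp [Matrix.det_diagonal]

theorem tile_isom {e₁ e₂ : Plane} (F : Frame e₁ e₂) {a b c : ℝ} (ha : 0 < a) (hb : 0 < b)
    (h : c ^ 2 = a ^ 2 + b ^ 2 + a * b) (z : Plane) (u1 u2 v1 v2 : ℝ)
    (hu : u1 ^ 2 + u1 * u2 + u2 ^ 2 = a ^ 2)
    (hv : v1 ^ 2 + v1 * v2 + v2 ^ 2 = b ^ 2)
    (hw : (u1 - v1) ^ 2 + (u1 - v1) * (u2 - v2) + (u2 - v2) ^ 2 = c ^ 2) :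
    ∃ f : Plane ≃ᵢ Plane, f '' Tri 0 (a • e₁) ((-b) • e₂) =
      Tri z (u1 • e₁ + u2 • e₂) (v1 • e₁ + v2 • e₂) ∧
      MeasureTheory.volume (Tri z (u1 • e₁ + u2 • e₂) (v1 • e₁ + v2 • e₂)) =
        MeasureTheory.volume (Tri 0 (a • e₁) ((-b) • e₂)) := by
  have W : Frame ((u1 / a) • e₁ + (u2 / a) • e₂) ((-v1 / b) • e₁ + (-v2 / b) • e₂) := by
    constructor
    · rw [F.inner]; field_simp; linarith
    · rw [F.inner]; field_simp; linarith
    · rw [F.inner]; field_simp; linarith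
  obtain ⟨g, g1, g2⟩ := F.exists_isom W
  have ga : g (a • e₁) = u1 • e₁ + u2 • e₂ := by
    rw [map_smul, g1, smul_add, smul_smul, smul_smul, mul_div_cancel₀ _ ha.ne',
      mul_div_cancel₀ _ ha.ne']
  have gb : g ((-b) • e₂) = v1 • e₁ + v2 • e₂ := by
    rw [map_smul, g2, smul_add, smul_smul, smul_smul]
    congr 2 <;> field_simp
  have hg : g '' Tri 0 (a • e₁) ((-b) • e₂) = Tri 0 (u1 • e₁ + u2 • e₂) (v1 • e₁ + v2 • e₂) := by
    have := Tri_image (g.toLinearEquiv : Plane →ₗ[ℝ] Plane) 0 (a • e₁) ((-b) • e₂)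
    simp only [map_zero] at this
    rw [← ga, ← gb]
    exact this
  refine ⟨g.toIsometryEquiv.trans (IsometryEquiv.addLeft z), ?_, ?_⟩
  · have : ⇑(g.toIsometryEquiv.trans (IsometryEquiv.addLeft z)) = (fun x => z + x) ∘ g := rfl
    rw [this, Set.image_comp, hg, Tri_add, add_zero]
  · rw [vol_Tri_z, ← hg]
    have h1 : g '' Tri 0 (a • e₁) ((-b) • e₂) = g.symm ⁻¹' Tri 0 (a • e₁) ((-b) • e₂) :=
      g.toEquiv.image_eq_preimage_symm _
    rw [h1]
    exact g.symm.measurePreserving.measure_preimage_equiv (f := g.symm.toMeasurableEquiv) _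

theorem cov_list {e₁ e₂ : Plane} (F : Frame e₁ e₂) {a b c : ℝ} (ha : 0 < a) (hb : 0 < b)
    (h : c ^ 2 = a ^ 2 + b ^ 2 + a * b) (O : Plane) {S : Set (ℝ × ℝ)} {n : ℝ}
    (hS : Cov_s9 a b c S n) :
    ∃ L : List (Plane ≃ᵢ Plane), (L.length : ℝ) = n ∧
      (∀ f ∈ L, MeasureTheory.volume (f '' Tri 0 (a • e₁) ((-b) • e₂)) =
        MeasureTheory.volume (Tri 0 (a • e₁) ((-b) • e₂))) ∧
      (fun p : ℝ × ℝ => O + p.1 • e₁ + p.2 • e₂) '' S =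
        {x | ∃ f ∈ L, x ∈ f '' Tri 0 (a • e₁) ((-b) • e₂)} := by
  induction hS with
  | tile z1 z2 u1 u2 v1 v2 hu hv hw =>
    obtain ⟨f, hf, hvol⟩ := tile_isom F ha hb h (O + z1 • e₁ + z2 • e₂) u1 u2 v1 v2 hu hv hw
    refine ⟨[f], by simp, ?_, ?_⟩
    · intro f' hf'
      rw [List.mem_singleton.1 hf', hf, hvol]
    · simp only [List.mem_singleton, exists_eq_left]
      rw [hf]
      ext x
      constructor
      · rintro ⟨⟨p, q⟩, ⟨s, t, h1, h2, h3, h4, h5⟩, rfl⟩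
        refine ⟨s, t, h1, h2, h3, ?_⟩
        simp only at h4 h5
        subst h4 h5
        module
      · rintro ⟨s, t, h1, h2, h3, rfl⟩
        refine ⟨(z1 + s * u1 + t * v1, z2 + s * u2 + t * v2), ⟨s, t, h1, h2, h3, rfl, rfl⟩, ?_⟩
        module
  | union S T m n _ _ h1 h2 =>
    obtain ⟨L1, l1, v1, s1⟩ := h1
    obtain ⟨L2, l2, v2, s2⟩ := h2
    refine ⟨L1 ++ L2, by simp [l1, l2], ?_, ?_⟩
    · intro f hf
      rcases List.mem_append.1 hf with hf | hf
      · exact v1 f hf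
      · exact v2 f hf
    · rw [Set.image_union, s1, s2]
      ext x
      constructor
      · rintro (⟨f, hf, hx⟩ | ⟨f, hf, hx⟩)
        · exact ⟨f, List.mem_append_left _ hf, hx⟩
        · exact ⟨f, List.mem_append_right _ hf, hx⟩
      · rintro ⟨f, hf, hx⟩
        rcases List.mem_append.1 hf with hf | hf
        · exact Or.inl ⟨f, hf, hx⟩
        · exact Or.inr ⟨f, hf, hx⟩

theorem SS_image {e₁ e₂ : Plane} {a b k : ℝ} (ha : 0 < a) (hb : 0 < b) (hk : 0 < k) (R : Plane) :
    (fun p : ℝ × ℝ => (R - (k * a * b) • e₁ - (k * a * b) • e₂) + p.1 • e₁ + p.2 • e₂) '' SS a b k =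
      Tri R ((-(k * b * (2 * a + b))) • e₁) ((-(k * a * (a + 2 * b))) • e₂) := by
  have hA : 0 < k * b * (2 * a + b) := by positivity
  have hB : 0 < k * a * (a + 2 * b) := by positivity
  ext x
  constructor
  · rintro ⟨⟨p, q⟩, ⟨h1, h2, h3⟩, rfl⟩
    simp only at h1 h2 h3
    refine ⟨(k * a * b - p) / (k * b * (2 * a + b)), (k * a * b - q) / (k * a * (a + 2 * b)),
      div_nonneg (by linarith) hA.le, div_nonneg (by linarith) hB.le, ?_, ?_⟩
    · rw [div_add_div _ _ hA.ne' hB.ne', div_le_one (by positivity)]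
      have := mul_le_mul_of_nonneg_left h3 hk.le
      linarith
    · rw [smul_smul, smul_smul]
      rw [show (k * a * b - p) / (k * b * (2 * a + b)) * -(k * b * (2 * a + b)) = p - k * a * b by
        field_simp; ring,
        show (k * a * b - q) / (k * a * (a + 2 * b)) * -(k * a * (a + 2 * b)) = q - k * a * b by
        field_simp; ring]
      module
  · rintro ⟨s, t, h1, h2, h3, rfl⟩
    refine ⟨(k * a * b - s * (k * b * (2 * a + b)), k * a * b - t * (k * a * (a + 2 * b))),
      ⟨?_, ?_, ?_⟩, ?_⟩
    · simp only; nlinarith [mul_nonneg h1 hA.le]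
    · simp only; nlinarith [mul_nonneg h2 hB.le]
    · simp only
      have : 0 ≤ (k * a * b * (2 * a + b) * (a + 2 * b)) * (1 - (s + t)) :=
        mul_nonneg (by positivity) (by linarith)
      linarith
    · module

theorem stmt9 (a b c : ℕ) (ha : 0 < a) (hb : 0 < b) (hc : 0 < c)
    (hab : Nat.Coprime a b) (hac : Nat.Coprime a c) (hbc : Nat.Coprime b c)
    (h : c ^ 2 = a ^ 2 + b ^ 2 + a * b) (m : ℕ) (hm : 1 ≤ m) :
    ∀ Δ : Set Plane,
      IsTriangle (((a : ℝ) + 2 * b) * m * a * b) (((b : ℝ) + 2 * a) * m * b ^ 2)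
        ((m : ℝ) * b * c ^ 2) Δ →
      TilesInto Δ ((a + 2 * b) * (b + 2 * a) * m ^ 2 * b ^ 2) a b c := by
  rintro _ ⟨P, Q, R, hQR, hPR, hPQ, rfl⟩
  have hcov := cov_final a b c m ha hb hc hm hab h
  have h' : (c : ℝ) ^ 2 = (a : ℝ) ^ 2 + b ^ 2 + a * b := by exact_mod_cast h
  have ha' : (0 : ℝ) < a := by exact_mod_cast ha
  have hb' : (0 : ℝ) < b := by exact_mod_cast hb
  have hc' : (0 : ℝ) < c := by exact_mod_cast hc
  have hm' : (0 : ℝ) < m := by exact_mod_cast hm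
  obtain ⟨k, hk⟩ : ∃ k : ℝ, k = ((m * b : ℕ) : ℝ) := ⟨_, rfl⟩
  have hk2 : k = m * b := by rw [hk]; push_cast; rfl
  have hk' : 0 < k := by rw [hk2]; positivity
  rw [← hk] at hcov
  have hA : 0 < k * b * (2 * a + b) := by positivity
  have hB : 0 < k * a * (a + 2 * b) := by positivity
  -- the frame
  obtain ⟨e₁, he1⟩ : ∃ e₁ : Plane, P - R = (-(k * b * (2 * a + b))) • e₁ :=
    ⟨(-(k * b * (2 * a + b)))⁻¹ • (P - R), by rw [smul_inv_smul₀ (neg_ne_zero.2 hA.ne')]⟩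
  obtain ⟨e₂, he2⟩ : ∃ e₂ : Plane, Q - R = (-(k * a * (a + 2 * b))) • e₂ :=
    ⟨(-(k * a * (a + 2 * b)))⁻¹ • (Q - R), by rw [smul_inv_smul₀ (neg_ne_zero.2 hB.ne')]⟩
  have n1 : ‖e₁‖ = 1 := by
    rw [dist_eq_norm, he1, norm_smul, norm_neg, Real.norm_of_nonneg hA.le] at hPR
    have : k * b * (2 * a + b) * ‖e₁‖ = k * b * (2 * a + b) * 1 := by rw [hPR, hk2]; ring
    exact mul_left_cancel₀ hA.ne' this
  have n2 : ‖e₂‖ = 1 := by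
    rw [dist_eq_norm, he2, norm_smul, norm_neg, Real.norm_of_nonneg hB.le] at hQR
    have : k * a * (a + 2 * b) * ‖e₂‖ = k * a * (a + 2 * b) * 1 := by rw [hQR, hk2]; ring
    exact mul_left_cancel₀ hB.ne' this
  have F : Frame e₁ e₂ := by
    refine ⟨by rw [real_inner_self_eq_norm_sq, n1]; norm_num,
      by rw [real_inner_self_eq_norm_sq, n2]; norm_num, ?_⟩
    have e : P - Q = (-(k * b * (2 * a + b))) • e₁ - (-(k * a * (a + 2 * b))) • e₂ := by
      rw [← he1, ← he2]; abel
    have e3 : ‖P - Q‖ ^ 2 = (k * c ^ 2) ^ 2 := by rw [← dist_eq_norm, hPQ, hk2]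
    rw [e, norm_sub_sq_real, norm_smul, norm_smul, n1, n2, real_inner_smul_left,
      real_inner_smul_right, norm_neg, norm_neg, Real.norm_of_nonneg hA.le,
      Real.norm_of_nonneg hB.le, h'] at e3
    have : (k * b * (2 * a + b)) * (k * a * (a + 2 * b)) * inner ℝ e₁ e₂ =
      (k * b * (2 * a + b)) * (k * a * (a + 2 * b)) * (1 / 2) := by linarith
    exact mul_left_cancel₀ (mul_pos hA hB).ne' this
  have hΔ : convexHull ℝ {P, Q, R} =
      Tri R ((-(k * b * (2 * a + b))) • e₁) ((-(k * a * (a + 2 * b))) • e₂) := by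
    rw [hull_eq_Tri, Tri_swap, he1, he2]
  obtain ⟨L, hL, hLv, hLs⟩ := cov_list F ha' hb' h' (R - (k * a * b) • e₁ - (k * a * b) • e₂) hcov
  rw [SS_image ha' hb' hk' R, ← hΔ] at hLs
  have hN : L.length = (a + 2 * b) * (b + 2 * a) * m ^ 2 * b ^ 2 := by
    have : (L.length : ℝ) = (((a + 2 * b) * (b + 2 * a) * m ^ 2 * b ^ 2 : ℕ) : ℝ) := by
      rw [hL, hk2]; push_cast; ring
    exact_mod_cast this
  rw [← hN]
  have hun : convexHull ℝ {P, Q, R} = ⋃ i : Fin L.length, L.get i ''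
      Tri 0 ((a : ℝ) • e₁) ((-(b : ℝ)) • e₂) := by
    rw [hLs]
    ext x
    rw [Set.mem_iUnion]
    constructor
    · rintro ⟨f, hf, hx⟩
      obtain ⟨i, rfl⟩ := List.get_of_mem hf
      exact ⟨i, hx⟩
    · rintro ⟨i, hx⟩
      exact ⟨_, List.get_mem _ _, hx⟩
  refine ⟨L.get, Tri 0 ((a : ℝ) • e₁) ((-(b : ℝ)) • e₂),
    ⟨(-(b : ℝ)) • e₂, (a : ℝ) • e₁, 0, ?_, ?_, ?_, ?_⟩, hun, ?_⟩
  · rw [dist_zero_right, norm_smul, n1, Real.norm_of_nonneg ha'.le, mul_one]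
  · rw [dist_zero_right, norm_smul, n2, norm_neg, Real.norm_of_nonneg hb'.le, mul_one]
  · have e := F.normsq (-a) (-b)
    rw [dist_eq_norm, show (-(b : ℝ)) • e₂ - (a : ℝ) • e₁ = (-(a : ℝ)) • e₁ + (-(b : ℝ)) • e₂ by
      module]
    refine (sq_eq_sq₀ (norm_nonneg _) hc'.le).1 ?_
    rw [e, h']; ring
  · rw [hull_eq_Tri, sub_zero, sub_zero]
  · refine disj_of_area _ _ (vol_Tri_fin 0 ((a : ℝ) • e₁) ((-(b : ℝ)) • e₂))
      (fun i => hLv _ (List.get_mem _ _)) ?_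
    rw [← hun, hΔ, vol_Tri_z]
    obtain ⟨G, G1, G2, Gd⟩ := F.exists_diag (-(k * b * (2 * a + b)) / a) (k * a * (a + 2 * b) / b)
    have hG := Tri_image G 0 ((a : ℝ) • e₁) ((-(b : ℝ)) • e₂)
    rw [map_zero, map_smul, map_smul, G1, G2, smul_smul, smul_smul,
      show (a : ℝ) * (-(k * b * (2 * a + b)) / a) = -(k * b * (2 * a + b)) by field_simp,
      show -(b : ℝ) * (k * a * (a + 2 * b) / b) = -(k * a * (a + 2 * b)) by field_simp] at hG
    rw [← hG, MeasureTheory.Measure.addHaar_image_linearMap, Gd]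
    congr 1
    rw [show -(k * b * (2 * a + b)) / a * (k * a * (a + 2 * b) / b) =
      -((a + 2 * b) * (b + 2 * a) * k ^ 2) by field_simp; ring, abs_neg, ← hL, Nat.abs_cast,
      ENNReal.ofReal_natCast]
end
end
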